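/- arXiv:2510.02122 — 3 statements merged into one kernel-verified Lean document; each statement's English description precedes it below -/
import Mathlib

section
/- Let n ≥ 1 and let c_1, …, c_{2n} ∈ ℂ^{2^n × 2^n} be Majorana operators. Let H = Σ_{(j,k)∈E} w_{jk}(1/4 − n_j n_k) + Σ_{j∈V} μ_j (n_j − 1/2) + Σ_{(j,k)∈E'} w'_{jk}(−a_j† a_k − a_k† a_j) be a traceless classically interacting fermionic Hamiltonian with w_{jk} ≥ 0, w'_{jk} ∈ ℝ, μ_j ∈ ℝ. Then there exists a pure fermionic Gaussian state ρ such that tr(ρ H) ≥ (1/3)·λ_max(H). -/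
open Matrix
open scoped ComplexOrder

noncomputable section

/-- A family of `2n` Majorana operators on `ℂ^(2^n)`. -/
def IsMajorana (n : ℕ) (c : Fin (2*n) → Matrix (Fin (2^n)) (Fin (2^n)) ℂ) : Prop :=
  (∀ j, (c j).IsHermitian) ∧
  ∀ j k, c j * c k + c k * c j =
    if j = k then (2 : ℂ) • (1 : Matrix (Fin (2^n)) (Fin (2^n)) ℂ) else 0

/-- The first Majorana operator of mode `j` (i.e. `c_{2j-1}` in 1-based indexing). -/
def majA (n : ℕ) (c : Fin (2*n) → Matrix (Fin (2^n)) (Fin (2^n)) ℂ) (j : Fin n) :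
    Matrix (Fin (2^n)) (Fin (2^n)) ℂ :=
  c ⟨2*j, by have := j.isLt; omega⟩

/-- The second Majorana operator of mode `j` (i.e. `c_{2j}` in 1-based indexing). -/
def majB (n : ℕ) (c : Fin (2*n) → Matrix (Fin (2^n)) (Fin (2^n)) ℂ) (j : Fin n) :
    Matrix (Fin (2^n)) (Fin (2^n)) ℂ :=
  c ⟨2*j+1, by have := j.isLt; omega⟩

/-- Annihilation operator `a_j = (c_{2j-1} + i c_{2j})/2`. -/
def ann (n : ℕ) (c : Fin (2*n) → Matrix (Fin (2^n)) (Fin (2^n)) ℂ) (j : Fin n) :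
    Matrix (Fin (2^n)) (Fin (2^n)) ℂ :=
  ((1:ℂ)/2) • (majA n c j + Complex.I • majB n c j)

/-- Number operator `n_j = a_j† a_j`. -/
def num (n : ℕ) (c : Fin (2*n) → Matrix (Fin (2^n)) (Fin (2^n)) ℂ) (j : Fin n) :
    Matrix (Fin (2^n)) (Fin (2^n)) ℂ :=
  (ann n c j)ᴴ * ann n c j

/-- The fermionic Gaussian state `2^{-n} ∏_j (1 + i λ_j c̃_{2j-1} c̃_{2j})`,
where `c̃_i = Σ_k R_{ik} c_k`. -/
def gaussOf (n : ℕ) (c : Fin (2*n) → Matrix (Fin (2^n)) (Fin (2^n)) ℂ)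
    (lam : Fin n → ℝ) (R : Matrix (Fin (2*n)) (Fin (2*n)) ℝ) :
    Matrix (Fin (2^n)) (Fin (2^n)) ℂ :=
  ((2:ℂ)^n)⁻¹ •
    ((List.finRange n).map (fun j =>
      (1 : Matrix (Fin (2^n)) (Fin (2^n)) ℂ) +
        (Complex.I * (lam j : ℂ)) •
          ((∑ k, ((R ⟨2*j, by have := j.isLt; omega⟩ k : ℝ) : ℂ) • c k) *
           (∑ k, ((R ⟨2*j+1, by have := j.isLt; omega⟩ k : ℝ) : ℂ) • c k)))).prod

/-- A (generally mixed) fermionic Gaussian state. -/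
def IsGaussianState (n : ℕ) (c : Fin (2*n) → Matrix (Fin (2^n)) (Fin (2^n)) ℂ)
    (ρ : Matrix (Fin (2^n)) (Fin (2^n)) ℂ) : Prop :=
  ∃ (lam : Fin n → ℝ) (R : Matrix (Fin (2*n)) (Fin (2*n)) ℝ),
    (∀ j, lam j ∈ Set.Icc (-1:ℝ) 1) ∧ R * Rᵀ = 1 ∧ R.det = 1 ∧ ρ = gaussOf n c lam R

/-- A pure fermionic Gaussian state: all `λ_j = ±1`. -/
def IsPureGaussianState (n : ℕ) (c : Fin (2*n) → Matrix (Fin (2^n)) (Fin (2^n)) ℂ)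
    (ρ : Matrix (Fin (2^n)) (Fin (2^n)) ℂ) : Prop :=
  ∃ (lam : Fin n → ℝ) (R : Matrix (Fin (2*n)) (Fin (2*n)) ℝ),
    (∀ j, lam j = 1 ∨ lam j = -1) ∧ R * Rᵀ = 1 ∧ R.det = 1 ∧ ρ = gaussOf n c lam R

/-- The largest (real) eigenvalue of a Hermitian matrix. -/
def lamMax {m : Type} [Fintype m] [DecidableEq m] (M : Matrix m m ℂ) : ℝ :=
  sSup {x : ℝ | (x : ℂ) ∈ spectrum ℂ M}

namespace Gz
variable {d : Type} [Fintype d] [DecidableEq d] {n : ℕ}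

/-- Majorana family split into two halves. -/
structure Maj (A B : Fin n → Matrix d d ℂ) : Prop where
  hA : ∀ j, (A j)ᴴ = A j
  hB : ∀ j, (B j)ᴴ = B j
  AA : ∀ j k, A j * A k + A k * A j = if j = k then (2:ℂ) • (1 : Matrix d d ℂ) else 0
  BB : ∀ j k, B j * B k + B k * B j = if j = k then (2:ℂ) • (1 : Matrix d d ℂ) else 0
  AB : ∀ j k, A j * B k + B k * A j = 0

/-- `i A_j B_k`. -/
def G (A B : Fin n → Matrix d d ℂ) (j k : Fin n) : Matrix d d ℂ := Complex.I • (A j * B k)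

/-- rotated family -/
def rot (V : Matrix (Fin n) (Fin n) ℝ) (A : Fin n → Matrix d d ℂ) (j : Fin n) : Matrix d d ℂ :=
  ∑ k, (V k j : ℂ) • A k

theorem rot_mul (V W : Matrix (Fin n) (Fin n) ℝ) (X Y : Fin n → Matrix d d ℂ) (j k : Fin n) :
    rot V X j * rot W Y k = ∑ x, ∑ y, ((V x j : ℂ) * (W y k : ℂ)) • (X x * Y y) := by
  simp only [rot, Finset.sum_mul_sum, smul_mul_smul_comm]

section
variable {A B : Fin n → Matrix d d ℂ} (h : Maj A B)
include h

theorem Maj.A2 (j : Fin n) : A j * A j = 1 := by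
  have := h.AA j j
  rw [if_pos rfl, ← two_smul ℂ] at this
  exact smul_right_injective _ (two_ne_zero) this

theorem Maj.B2 (j : Fin n) : B j * B j = 1 := by
  have := h.BB j j
  rw [if_pos rfl, ← two_smul ℂ] at this
  exact smul_right_injective _ (two_ne_zero) this

theorem Maj.AAn {j k : Fin n} (hjk : j ≠ k) : A j * A k = - (A k * A j) := by
  have := h.AA j k
  rw [if_neg hjk] at this
  exact eq_neg_of_add_eq_zero_left this

theorem Maj.BBn {j k : Fin n} (hjk : j ≠ k) : B j * B k = - (B k * B j) := by
  have := h.BB j k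
  rw [if_neg hjk] at this
  exact eq_neg_of_add_eq_zero_left this

theorem Maj.BA (j k : Fin n) : B j * A k = - (A k * B j) := 
  eq_neg_of_add_eq_zero_right (h.AB k j)

/-- Z_l commutes with A_j, j ≠ l -/
theorem Maj.ZA {l j : Fin n} (hjk : l ≠ j) : G A B l l * A j = A j * G A B l l := by
  simp only [G, smul_mul_assoc, mul_smul_comm]
  congr 1
  rw [mul_assoc, h.BA, mul_neg, ← mul_assoc, h.AAn hjk, neg_mul, neg_neg, mul_assoc]

theorem Maj.ZB {l j : Fin n} (hjk : l ≠ j) : G A B l l * B j = B j * G A B l l := by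
  simp only [G, smul_mul_assoc, mul_smul_comm]
  congr 1
  rw [mul_assoc, h.BBn hjk, mul_neg, ← mul_assoc, ← mul_assoc, h.BA, neg_mul]

theorem Maj.ZA' (l : Fin n) : G A B l l * A l = - (A l * G A B l l) := by
  simp only [G, smul_mul_assoc, mul_smul_comm]
  rw [mul_assoc, h.BA, mul_neg, smul_neg]

theorem Maj.ZB' (l : Fin n) : G A B l l * B l = - (B l * G A B l l) := by
  simp only [G, smul_mul_assoc, mul_smul_comm]
  rw [← mul_assoc (B l), h.BA, neg_mul, smul_neg, neg_neg]

theorem Maj.ZZ (l j : Fin n) : G A B l l * G A B j j = G A B j j * G A B l l := by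
  by_cases hlj : l = j
  · rw [hlj]
  · conv_lhs => rw [G.eq_def A B j j]
    conv_rhs => rw [G.eq_def A B j j]
    rw [mul_smul_comm, ← mul_assoc, h.ZA hlj, mul_assoc, h.ZB hlj, ← mul_assoc, smul_mul_assoc]

theorem Maj.Z2 (l : Fin n) : G A B l l * G A B l l = 1 := by
  conv_lhs => rw [G.eq_def A B l l]
  simp only [smul_mul_assoc, mul_smul_comm, smul_smul, Complex.I_mul_I]
  rw [mul_assoc, ← mul_assoc (B l), h.BA, neg_mul, mul_assoc, h.B2, mul_neg, mul_one, h.A2]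
  simp

theorem Maj.Gh (j k : Fin n) : (G A B j k)ᴴ = G A B j k := by
  simp only [G, conjTranspose_smul, conjTranspose_mul, h.hA, h.hB, h.BA]
  simp

theorem Maj.rot {V : Matrix (Fin n) (Fin n) ℝ} (hV : Vᵀ * V = 1) : Maj (rot V A) (rot V B) := by
  have key : ∀ j k, ∑ x, (V x j : ℂ) * (V x k : ℂ) = if j = k then 1 else 0 := by
    intro j k
    have := congrFun (congrFun hV j) k
    rw [Matrix.mul_apply, Matrix.one_apply] at this
    simp only [transpose_apply] at this
    have h2 := congrArg (fun x : ℝ => (x : ℂ)) this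
    simp only [Complex.ofReal_sum, Complex.ofReal_mul] at h2
    rw [h2]; split_ifs <;> simp
  have gen : ∀ (X : Fin n → Matrix d d ℂ), (∀ j k, X j * X k + X k * X j = if j = k then (2:ℂ) • (1 : Matrix d d ℂ) else 0) → 
      ∀ j k, Gz.rot V X j * Gz.rot V X k + Gz.rot V X k * Gz.rot V X j = if j = k then (2:ℂ) • (1 : Matrix d d ℂ) else 0 := by
    intro X hX j k
    rw [rot_mul, rot_mul, Finset.sum_comm (f := fun x y => ((V x k : ℂ) * (V y j : ℂ)) • (X x * X y)),
      ← Finset.sum_add_distrib]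
    have : ∀ x y, ((V x j : ℂ) * (V y k : ℂ)) • (X x * X y) + ((V y k : ℂ) * (V x j : ℂ)) • (X y * X x)
        = ((V x j : ℂ) * (V y k : ℂ)) • (X x * X y + X y * X x) := by
      intro x y; rw [smul_add, mul_comm (V y k : ℂ)]
    simp only [← Finset.sum_add_distrib, this]
    simp only [hX, smul_ite, smul_zero, Finset.sum_ite_eq, Finset.mem_univ, if_true]
    rw [← Finset.sum_smul, key]
    split_ifs <;> simp
  refine ⟨?_, ?_, gen A h.AA, gen B h.BB, ?_⟩
  · intro j; simp [Gz.rot, conjTranspose_sum, conjTranspose_smul, h.hA]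
  · intro j; simp [Gz.rot, conjTranspose_sum, conjTranspose_smul, h.hB]
  · intro j k
    rw [rot_mul, rot_mul, Finset.sum_comm (f := fun x y => ((V x k : ℂ) * (V y j : ℂ)) • (B x * A y)),
      ← Finset.sum_add_distrib]
    have : ∀ x y, ((V x j : ℂ) * (V y k : ℂ)) • (A x * B y) + ((V y k : ℂ) * (V x j : ℂ)) • (B y * A x)
        = ((V x j : ℂ) * (V y k : ℂ)) • (A x * B y + B y * A x) := by
      intro x y; rw [smul_add, mul_comm (V y k : ℂ)]
    simp only [← Finset.sum_add_distrib, this]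
    simp [h.AB]
end

/-- list product of `1 + s_j Z_j` -/
def Pr (A B : Fin n → Matrix d d ℂ) (s : Fin n → ℝ) (L : List (Fin n)) : Matrix d d ℂ :=
  (L.map (fun j => (1 : Matrix d d ℂ) + (s j : ℂ) • G A B j j)).prod

section
variable {A B : Fin n → Matrix d d ℂ} (h : Maj A B)
include h

theorem Maj.PZ (s : Fin n → ℝ) (L : List (Fin n)) (l : Fin n) :
    G A B l l * Pr A B s L = Pr A B s L * G A B l l := by
  induction L with
  | nil => simp [Pr]
  | cons j L ih =>
    simp only [Pr, List.map_cons, List.prod_cons] at ih ⊢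
    rw [← mul_assoc, mul_assoc _ _ (G A B l l), ← ih, ← mul_assoc]
    congr 1
    simp [mul_add, add_mul, h.ZZ l j]

theorem Maj.PA (s : Fin n → ℝ) (L : List (Fin n)) (l : Fin n) (hl : l ∉ L) :
    A l * Pr A B s L = Pr A B s L * A l := by
  induction L with
  | nil => simp [Pr]
  | cons j L ih =>
    simp only [List.mem_cons, not_or] at hl
    specialize ih hl.2
    simp only [Pr, List.map_cons, List.prod_cons] at ih ⊢
    rw [← mul_assoc, mul_assoc _ _ (A l), ← ih, ← mul_assoc]
    congr 1
    simp [mul_add, add_mul, h.ZA (Ne.symm hl.1)]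

theorem Maj.trP (s : Fin n → ℝ) (L : List (Fin n)) (hL : L.Nodup) :
    (Pr A B s L).trace = Fintype.card d := by
  induction L with
  | nil => simp [Pr]
  | cons j L ih =>
    rw [List.nodup_cons] at hL
    specialize ih hL.2
    have e : Pr A B s (j :: L) = Pr A B s L + (s j : ℂ) • (G A B j j * Pr A B s L) := by
      simp [Pr, add_mul]
    have z : (G A B j j * Pr A B s L).trace = 0 := by
      have e1 : (G A B j j * Pr A B s L).trace = - (G A B j j * Pr A B s L).trace := by
        conv_lhs => rw [← mul_one (G A B j j * Pr A B s L), ← h.A2 j, ← mul_assoc, mul_assoc (G A B j j), ← h.PA s L j hL.1,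
          ← mul_assoc, h.ZA', neg_mul, neg_mul, trace_neg, trace_mul_comm, ← mul_assoc, ← mul_assoc, h.A2, one_mul]
      exact self_eq_neg.mp e1
    rw [e, trace_add, trace_smul, z, ih]; simp

/-- eigen-equation -/
theorem Maj.ZP (s : Fin n → ℝ) (hs : ∀ j, s j = 1 ∨ s j = -1) (L : List (Fin n)) (l : Fin n) (hl : l ∈ L) :
    G A B l l * Pr A B s L = (s l : ℂ) • Pr A B s L := by
  induction L with
  | nil => simp at hl
  | cons j L ih =>
    have e : Pr A B s (j :: L) = (1 + (s j : ℂ) • G A B j j) * Pr A B s L := by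
      simp [Pr]
    by_cases hlj : l = j
    · subst hlj
      rw [e, ← mul_assoc, mul_add, mul_smul_comm, h.Z2, ← smul_mul_assoc]
      congr 1
      rcases hs l with q | q <;> simp [q, add_comm]
    · have hl' : l ∈ L := by simpa [hlj] using hl
      rw [e, ← mul_assoc, mul_add, mul_one, mul_smul_comm, h.ZZ, ← smul_mul_assoc]
      have : G A B l l + ((s j:ℂ) • G A B j j) * G A B l l = (1 + (s j : ℂ) • G A B j j) * G A B l l := by
        rw [add_mul, one_mul]
      rw [this, mul_assoc, ih hl', mul_smul_comm]

theorem Maj.Ph (s : Fin n → ℝ) (L : List (Fin n)) : (Pr A B s L)ᴴ = Pr A B s L := by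
  induction L with
  | nil => simp [Pr]
  | cons j L ih =>
    have e : Pr A B s (j :: L) = (1 + (s j : ℂ) • G A B j j) * Pr A B s L := by
      simp [Pr]
    rw [e, conjTranspose_mul, ih]
    simp [conjTranspose_add, conjTranspose_smul, h.Gh, mul_add, add_mul, h.PZ]

/-- the product as a function of a list squares -/
theorem Maj.PP (s : Fin n → ℝ) (hs : ∀ j, s j = 1 ∨ s j = -1) (L L' : List (Fin n)) (hL : L' ⊆ L) :
    Pr A B s L' * Pr A B s L = (2:ℂ)^(L'.length) • Pr A B s L := by
  induction L' with
  | nil => simp [Pr]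
  | cons j L' ih =>
    have e : Pr A B s (j :: L') = (1 + (s j : ℂ) • G A B j j) * Pr A B s L' := by
      simp [Pr]
    rw [List.cons_subset] at hL
    rw [e, mul_assoc, ih hL.2, mul_smul_comm, add_mul, one_mul, smul_mul_assoc, h.ZP s hs L j hL.1, smul_smul]
    have : (s j : ℂ) * (s j : ℂ) = 1 := by rcases hs j with q | q <;> simp [q]
    rw [this, one_smul, ← two_smul ℂ, smul_smul, List.length_cons, pow_succ]

theorem Maj.Ppsd (s : Fin n → ℝ) (hs : ∀ j, s j = 1 ∨ s j = -1) (L : List (Fin n)) :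
    (Pr A B s L).PosSemidef := by
  have h1 := h.PP s hs L L (List.Subset.refl _)
  have h2 : (Pr A B s L).PosSemidef := by
    have h3 : Pr A B s L = ((2:ℂ)^(L.length))⁻¹ • ((Pr A B s L)ᴴ * Pr A B s L) := by
      rw [h.Ph, h1, smul_smul, inv_mul_cancel₀ (by positivity), one_smul]
    rw [h3]
    apply Matrix.PosSemidef.smul (posSemidef_conjTranspose_mul_self _)
    have : ((2:ℂ)^(L.length))⁻¹ = (((2:ℝ)^(L.length))⁻¹ : ℝ) := by push_cast; rfl
    rw [this]
    exact_mod_cast (by positivity : (0:ℝ) ≤ ((2:ℝ)^(L.length))⁻¹)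
  exact h2

theorem Maj.psd_of (Y : Matrix d d ℂ) (L : List (Fin n)) (hL : L.Nodup)
    (hY : ∀ s : Fin n → ℝ, (∀ j, s j = 1 ∨ s j = -1) → (Pr A B s L * Y).PosSemidef) : Y.PosSemidef := by
  induction L with
  | nil => simpa [Pr] using hY (fun _ => 1) (by simp)
  | cons j L ih =>
    rw [List.nodup_cons] at hL
    apply ih hL.2
    intro s hs
    have up : ∀ x : ℝ, Pr A B (Function.update s j x) (j :: L) = (1 + (x : ℂ) • G A B j j) * Pr A B s L := by
      intro x
      simp only [Pr, List.map_cons, List.prod_cons, Function.update_self]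
      congr 2
      apply List.map_congr_left
      intro a ha
      rw [Function.update_of_ne]
      rintro rfl; exact hL.1 ha
    have ups : ∀ x : ℝ, (x = 1 ∨ x = -1) → ∀ k, Function.update s j x k = 1 ∨ Function.update s j x k = -1 := by
      intro x hx k
      by_cases hk : k = j
      · subst hk; simpa using hx
      · rw [Function.update_of_ne hk]; exact hs k
    have p1 := hY _ (ups 1 (Or.inl rfl))
    have p2 := hY _ (ups (-1) (Or.inr rfl))
    rw [up] at p1 p2
    have p3 := (p1.add p2).smul (show (0:ℂ) ≤ 1/2 by norm_num [Complex.le_def])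
    convert p3 using 1
    rw [← add_mul, ← add_mul]
    have : (1 + ((1:ℝ) : ℂ) • G A B j j + (1 + ((-1:ℝ) : ℂ) • G A B j j)) = (2:ℂ) • (1 : Matrix d d ℂ) := by
      push_cast; rw [two_smul, one_smul, neg_smul, one_smul]; abel
    rw [this]; simp [smul_smul]

end
end Gz

namespace Gz
variable {d : Type} [Fintype d] [DecidableEq d] {n : ℕ}

theorem tr_zero (Z X ρ : Matrix d d ℂ) (h2 : Z * Z = 1) (hX : Z * X = - (X * Z)) (hρ : Z * ρ = ρ * Z) :
    (ρ * X).trace = 0 := by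
  have e1 : (ρ * X).trace = - (ρ * X).trace := by
    calc (ρ * X).trace = (ρ * (X * Z) * Z).trace := by rw [mul_assoc, mul_assoc X, h2, mul_one]
      _ = - (ρ * (Z * X) * Z).trace := by rw [hX]; simp
      _ = - (Z * (ρ * X * Z)).trace := by rw [← mul_assoc ρ, ← hρ]; simp only [mul_assoc]
      _ = - (ρ * X).trace := by rw [trace_mul_comm, mul_assoc, h2, mul_one]
  exact self_eq_neg.mp e1

/-- pure eigenstate for all `Z_l` -/
structure Eig (A B : Fin n → Matrix d d ℂ) (s : Fin n → ℝ) (ρ : Matrix d d ℂ) : Prop where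
  tr : ρ.trace = 1
  L : ∀ l, G A B l l * ρ = (s l : ℂ) • ρ
  R : ∀ l, ρ * G A B l l = (s l : ℂ) • ρ

section
variable {A B : Fin n → Matrix d d ℂ} (h : Maj A B) {s : Fin n → ℝ} {ρ : Matrix d d ℂ} (hρ : Eig A B s ρ)
include h hρ

theorem Eig.t0 (l : Fin n) (X : Matrix d d ℂ) (hX : G A B l l * X = - (X * G A B l l)) :
    (ρ * X).trace = 0 :=
  tr_zero _ _ _ (h.Z2 l) hX (by rw [hρ.L, hρ.R])

theorem Eig.t2 (j k : Fin n) : (ρ * G A B j k).trace = if j = k then (s j : ℂ) else 0 := by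
  by_cases hjk : j = k
  · subst hjk
    rw [if_pos rfl, hρ.R, trace_smul, hρ.tr]; simp
  · rw [if_neg hjk]
    apply hρ.t0 h j
    conv_lhs => rw [G.eq_def A B j k]
    conv_rhs => rw [G.eq_def A B j k]
    rw [mul_smul_comm, ← mul_assoc, h.ZA', neg_mul, mul_assoc, h.ZB hjk, smul_mul_assoc, smul_neg, mul_assoc]

theorem Eig.tB (j k : Fin n) : (ρ * (B j * B k)).trace = if j = k then 1 else 0 := by
  by_cases hjk : j = k
  · subst hjk
    rw [if_pos rfl, h.B2, mul_one, hρ.tr]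
  · rw [if_neg hjk]
    apply hρ.t0 h j
    rw [← mul_assoc, h.ZB', neg_mul, mul_assoc, h.ZB hjk, mul_assoc]

theorem Eig.s2 (l : Fin n) : (s l : ℂ) * (s l : ℂ) = 1 := by
  have h1 : (G A B l l * (G A B l l * ρ)).trace = 1 := by rw [← mul_assoc, h.Z2, one_mul, hρ.tr]
  rw [hρ.L, mul_smul_comm, hρ.L, smul_smul, trace_smul, hρ.tr] at h1
  simpa using h1

theorem Eig.t4 (p q r t : Fin n) : (ρ * (G A B p q * G A B r t)).trace =
    (if p = q then (s p : ℂ) else 0) * (if r = t then (s r : ℂ) else 0)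
     - (if p = t then (s p : ℂ) else 0) * (if r = q then (s r : ℂ) else 0)
     + (if p = r then 1 else 0) * (if q = t then 1 else 0) := by
  by_cases hpq : p = q
  · subst hpq
    rw [← mul_assoc, hρ.R, smul_mul_assoc, trace_smul, hρ.t2 h]
    by_cases hpr : p = r
    · subst hpr
      by_cases hpt : p = t <;> simp [hpt, hρ.s2 h]
    · simp [hpr, Ne.symm hpr]
  by_cases hpt : p = t
  · subst hpt
    have e : G A B p q * G A B r p = - (G A B p p * G A B r q) := by
      simp only [G, smul_mul_assoc, mul_smul_comm, smul_smul, Complex.I_mul_I]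
      rw [← smul_neg]
      congr 1
      have h1 : B p * (A r * B q) = B q * (A r * B p) * (-1) := by
        rw [← mul_assoc, h.BA, neg_mul, mul_assoc, h.BBn hpq, mul_neg, neg_neg, ← mul_assoc, ← mul_assoc, h.BA]
        simp
      rw [mul_assoc, mul_assoc, h1]; simp
    rw [e, mul_neg, trace_neg, ← mul_assoc, hρ.R, smul_mul_assoc, trace_smul, hρ.t2 h]
    simp [hpq, Ne.symm hpq]
  by_cases hpr : p = r
  · subst hpr
    have e : G A B p q * G A B p t = B q * B t := by
      simp only [G, smul_mul_assoc, mul_smul_comm, smul_smul, Complex.I_mul_I]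
      rw [mul_assoc, ← mul_assoc (B q), h.BA, neg_mul, mul_neg, mul_assoc (A p), ← mul_assoc, h.A2, one_mul]
      simp
    rw [e, hρ.tB h]; simp [hpq, hpt]
  · rw [hρ.t0 h p]
    · simp [hpq, hpr, hpt]
    · conv_lhs => rw [G.eq_def A B p q, G.eq_def A B r t]
      conv_rhs => rw [G.eq_def A B p q, G.eq_def A B r t]
      simp only [smul_mul_assoc, mul_smul_comm, ← smul_neg]
      congr 2
      have c1 : Commute (G A B p p) (B q * (A r * B t)) :=
        Commute.mul_right (h.ZB hpq) (Commute.mul_right (h.ZA hpr) (h.ZB hpt))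
      rw [mul_assoc (A p), ← mul_assoc, h.ZA', neg_mul, mul_assoc, c1.eq]
      simp only [mul_assoc]
end

/-- covariance matrix -/
def Mm (V : Matrix (Fin n) (Fin n) ℝ) (s : Fin n → ℝ) (j k : Fin n) : ℝ := ∑ l, V j l * s l * V k l

theorem rot_rot {V : Matrix (Fin n) (Fin n) ℝ} (hV : V * Vᵀ = 1) (X : Fin n → Matrix d d ℂ) :
    rot Vᵀ (rot V X) = X := by
  funext j
  simp only [rot, Finset.smul_sum, smul_smul]
  rw [Finset.sum_comm]
  simp only [← Finset.sum_smul, transpose_apply]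
  have : ∀ k, ∑ x, (V j x : ℂ) * (V k x : ℂ) = if j = k then 1 else 0 := by
    intro k
    have := congrFun (congrFun hV j) k
    rw [Matrix.mul_apply, Matrix.one_apply] at this
    simp only [transpose_apply] at this
    have h2 := congrArg (fun x : ℝ => (x : ℂ)) this
    simp only [Complex.ofReal_sum, Complex.ofReal_mul] at h2
    rw [h2]; split_ifs <;> simp
  simp [this]

section
variable {A B : Fin n → Matrix d d ℂ} (h : Maj A B) {V : Matrix (Fin n) (Fin n) ℝ} (hV : V * Vᵀ = 1)
  {s : Fin n → ℝ} {ρ : Matrix d d ℂ} (hρ : Eig (rot V A) (rot V B) s ρ)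
include hV

theorem G_exp (j k : Fin n) : G A B j k = ∑ x, ∑ y, ((V j x : ℂ) * (V k y : ℂ)) • G (rot V A) (rot V B) x y := by
  conv_lhs => rw [← rot_rot hV A, ← rot_rot hV B, G, rot_mul]
  simp only [Finset.smul_sum, G, transpose_apply]
  refine Finset.sum_congr rfl fun x _ => Finset.sum_congr rfl fun y _ => ?_
  rw [smul_comm]

include h hρ

theorem trG (j k : Fin n) : (ρ * G A B j k).trace = (Mm V s j k : ℂ) := by
  rw [G_exp hV]
  have h' := h.rot (V := V) (mul_eq_one_comm.mp hV)
  simp only [Finset.mul_sum, trace_sum, mul_smul_comm, trace_smul, hρ.t2 h']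
  simp only [smul_eq_mul, mul_ite, mul_zero, Finset.sum_ite_eq, Finset.mem_univ, if_true, Mm]
  push_cast
  refine Finset.sum_congr rfl fun x _ => ?_
  ring

theorem trGG (j k : Fin n) (hjk : j ≠ k) : (ρ * (G A B j j * G A B k k)).trace =
    ((Mm V s j j * Mm V s k k - Mm V s j k * Mm V s j k : ℝ) : ℂ) := by
  have h' := h.rot (V := V) (mul_eq_one_comm.mp hV)
  have hVjk : ∑ x, (V j x : ℂ) * (V k x : ℂ) = 0 := by
    have := congrFun (congrFun hV j) k
    rw [Matrix.mul_apply, Matrix.one_apply, if_neg hjk] at this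
    simp only [transpose_apply] at this
    exact_mod_cast congrArg (fun x : ℝ => (x : ℂ)) this
  have e : (ρ * (G A B j j * G A B k k)).trace = ∑ p, ∑ q, ∑ r, ∑ t, ((V j p : ℂ) * V j q * (V k r * V k t)) *
      ((if p = q then (s p : ℂ) else 0) * (if r = t then (s r : ℂ) else 0)
     - (if p = t then (s p : ℂ) else 0) * (if r = q then (s r : ℂ) else 0)
     + (if p = r then 1 else 0) * (if q = t then 1 else 0)) := by
    rw [G_exp hV j j, G_exp hV k k]
    rw [Finset.sum_mul, Finset.mul_sum, trace_sum]
    refine Finset.sum_congr rfl fun p _ => ?_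
    rw [Finset.sum_mul, Finset.mul_sum, trace_sum]
    refine Finset.sum_congr rfl fun q _ => ?_
    rw [Finset.mul_sum, Finset.mul_sum, trace_sum]
    refine Finset.sum_congr rfl fun r _ => ?_
    rw [Finset.mul_sum, Finset.mul_sum, trace_sum]
    refine Finset.sum_congr rfl fun t _ => ?_
    rw [smul_mul_smul_comm, mul_smul_comm, trace_smul, hρ.t4 h', smul_eq_mul]
  have M' : ∀ j k, (Mm V s j k : ℂ) = ∑ x, ∑ y, (V j x : ℂ) * V k y * (if x = y then (s x : ℂ) else 0) := by
    intro j k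
    simp only [mul_ite, mul_zero, Finset.sum_ite_eq, Finset.mem_univ, if_true, Mm]
    push_cast
    refine Finset.sum_congr rfl fun x _ => ?_
    ring
  rw [e]
  simp only [mul_add, mul_sub, Finset.sum_add_distrib, Finset.sum_sub_distrib]
  have e1 : ∑ p, ∑ q, ∑ r, ∑ t, ((V j p : ℂ) * V j q * (V k r * V k t)) *
      ((if p = q then (s p : ℂ) else 0) * (if r = t then (s r : ℂ) else 0)) = Mm V s j j * Mm V s k k := by
    rw [M', M', Finset.sum_mul_sum]
    refine Finset.sum_congr rfl fun p _ => ?_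
    rw [Finset.sum_comm]
    refine Finset.sum_congr rfl fun r _ => ?_
    rw [Finset.sum_mul_sum]
    refine Finset.sum_congr rfl fun q _ => Finset.sum_congr rfl fun t _ => ?_
    ring
  have e2 : ∑ p, ∑ q, ∑ r, ∑ t, ((V j p : ℂ) * V j q * (V k r * V k t)) *
      ((if p = t then (s p : ℂ) else 0) * (if r = q then (s r : ℂ) else 0)) = Mm V s j k * Mm V s j k := by
    rw [M', Finset.sum_mul_sum]
    refine Finset.sum_congr rfl fun p _ => ?_
    refine Finset.sum_congr rfl fun q _ => ?_
    rw [Finset.sum_comm, Finset.sum_mul_sum]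
    refine Finset.sum_congr rfl fun t _ => Finset.sum_congr rfl fun r _ => ?_
    by_cases hrq : r = q
    · subst hrq; simp only [if_true]; ring
    · simp [hrq, Ne.symm hrq]
  have e3 : ∑ p, ∑ q, ∑ r, ∑ t, ((V j p : ℂ) * V j q * (V k r * V k t)) *
      ((if p = r then (1 : ℂ) else 0) * (if q = t then (1 : ℂ) else 0)) = 0 := by
    have z : (∑ x, ∑ y, (V j x : ℂ) * V k y * (if x = y then (1 : ℂ) else 0)) = 0 := by
      simpa using hVjk
    have z2 : (∑ x, ∑ y, (V j x : ℂ) * V k y * (if x = y then (1 : ℂ) else 0)) *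
        (∑ x, ∑ y, (V j x : ℂ) * V k y * (if x = y then (1 : ℂ) else 0)) = 0 := by rw [z, zero_mul]
    refine Eq.trans ?_ z2
    rw [Finset.sum_mul_sum]
    refine Finset.sum_congr rfl fun p _ => ?_
    refine Finset.sum_congr rfl fun q _ => ?_
    rw [Finset.sum_mul_sum]
    refine Finset.sum_congr rfl fun r _ => Finset.sum_congr rfl fun t _ => ?_
    ring
  rw [e1, e2, e3]
  push_cast; ring
end

/-- multilinear vertices -/
theorem vertex (f : (Fin n → ℝ) → ℝ)
    (hf : ∀ s l, ∃ a b : ℝ, ∀ x, f (Function.update s l x) = a + b * x)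
    (s : Fin n → ℝ) (hs : ∀ j, |s j| ≤ 1) :
    ∃ t : Fin n → ℝ, (∀ j, t j = 1 ∨ t j = -1) ∧ f s ≤ f t := by
  have key : ∀ T : Finset (Fin n), ∃ t : Fin n → ℝ, (∀ j ∈ T, t j = 1 ∨ t j = -1) ∧ (∀ j, |t j| ≤ 1) ∧ f s ≤ f t := by
    intro T
    induction T using Finset.induction_on with
    | empty => exact ⟨s, by simp, hs, le_rfl⟩
    | insert l T hl ih =>
      obtain ⟨t, h1, h2, h3⟩ := ih
      obtain ⟨a, b, hab⟩ := hf t l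
      have ht : f t = a + b * t l := by rw [← hab, Function.update_eq_self]
      have h4 := abs_le.mp (h2 l)
      obtain ⟨x, hx, hx'⟩ : ∃ x : ℝ, (x = 1 ∨ x = -1) ∧ b * t l ≤ b * x := by
        rcases le_total 0 b with hb | hb
        · exact ⟨1, Or.inl rfl, by nlinarith⟩
        · exact ⟨-1, Or.inr rfl, by nlinarith⟩
      refine ⟨Function.update t l x, ?_, ?_, ?_⟩
      · intro j hj
        by_cases hjl : j = l
        · subst hjl; simpa using hx
        · rw [Function.update_of_ne hjl]
          exact h1 j (by simpa [hjl] using hj)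
      · intro j
        by_cases hjl : j = l
        · subst hjl
          rcases hx with rfl | rfl <;> simp
        · rw [Function.update_of_ne hjl]; exact h2 j
      · rw [hab]; linarith
  obtain ⟨t, h1, _, h3⟩ := key Finset.univ
  exact ⟨t, fun j => h1 j (Finset.mem_univ _), h3⟩

theorem Mm_update (V : Matrix (Fin n) (Fin n) ℝ) (s : Fin n → ℝ) (l : Fin n) (x : ℝ) (j k : Fin n) :
    Mm V (Function.update s l x) j k = Mm V s j k + (x - s l) * (V j l * V k l) := by
  have : ∀ m, V j m * Function.update s l x m * V k m = V j m * s m * V k m + if m = l then (x - s l) * (V j l * V k l) else 0 := by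
    intro m
    by_cases hm : m = l
    · subst hm; simp; ring
    · simp [hm]
  simp [Mm, this, Finset.sum_add_distrib]

/-- energy -/
def Fe (E E' : Finset (Fin n × Fin n)) (w w' : Fin n × Fin n → ℝ) (μ : Fin n → ℝ)
    (V : Matrix (Fin n) (Fin n) ℝ) (s : Fin n → ℝ) : ℝ :=
  ∑ e ∈ E, w e * (-(1/4) * (Mm V s e.1 e.1 + Mm V s e.2 e.2 + (Mm V s e.1 e.1 * Mm V s e.2 e.2 - Mm V s e.1 e.2 * Mm V s e.1 e.2)))
  + ∑ j, μ j * (1/2 * Mm V s j j) + ∑ e ∈ E', w' e * (-(1/2) * (Mm V s e.1 e.2 + Mm V s e.2 e.1))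

theorem Fe_affine (E E' : Finset (Fin n × Fin n)) (w w' : Fin n × Fin n → ℝ) (μ : Fin n → ℝ)
    (V : Matrix (Fin n) (Fin n) ℝ) (s : Fin n → ℝ) (l : Fin n) :
    ∃ a b : ℝ, ∀ x, Fe E E' w w' μ V (Function.update s l x) = a + b * x := by
  have S : ∀ {ι : Type} (T : Finset ι) (f : ι → ℝ → ℝ), (∀ i, ∃ a b : ℝ, ∀ x, f i x = a + b * x) →
      ∃ a b : ℝ, ∀ x, ∑ i ∈ T, f i x = a + b * x := by
    intro ι T f hf
    choose a b hab using hf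
    exact ⟨∑ i ∈ T, a i, ∑ i ∈ T, b i, fun x => by simp [hab, Finset.sum_add_distrib, Finset.sum_mul]⟩
  simp only [Fe, Mm_update]
  obtain ⟨a1, b1, h1⟩ := S E (fun e x => w e * (-(1/4) * ((Mm V s e.1 e.1 + (x - s l) * (V e.1 l * V e.1 l)) + (Mm V s e.2 e.2 + (x - s l) * (V e.2 l * V e.2 l)) + ((Mm V s e.1 e.1 + (x - s l) * (V e.1 l * V e.1 l)) * (Mm V s e.2 e.2 + (x - s l) * (V e.2 l * V e.2 l)) - (Mm V s e.1 e.2 + (x - s l) * (V e.1 l * V e.2 l)) * (Mm V s e.1 e.2 + (x - s l) * (V e.1 l * V e.2 l)))))) (by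
    intro e
    generalize Mm V s e.1 e.1 = m1
    generalize Mm V s e.2 e.2 = m2
    generalize Mm V s e.1 e.2 = m3
    generalize V e.1 l = v1
    generalize V e.2 l = v2
    have e0 : ∀ x, w e * (-(1/4) * ((m1 + (x - s l) * (v1 * v1)) + (m2 + (x - s l) * (v2 * v2)) + ((m1 + (x - s l) * (v1 * v1)) * (m2 + (x - s l) * (v2 * v2)) - (m3 + (x - s l) * (v1 * v2)) * (m3 + (x - s l) * (v1 * v2))))) = w e * (-(1/4) * (m1 + m2 + m1 * m2 - m3 * m3)) + (w e * (-(1/4) * (v1*v1+v2*v2+m1*(v2*v2)+m2*(v1*v1)-2*m3*(v1*v2)))) * (x - s l) := by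
      intro x; ring
    exact ⟨w e * (-(1/4) * (m1 + m2 + m1 * m2 - m3 * m3)) - (w e * (-(1/4) * (v1*v1+v2*v2+m1*(v2*v2)+m2*(v1*v1)-2*m3*(v1*v2)))) * s l, (w e * (-(1/4) * (v1*v1+v2*v2+m1*(v2*v2)+m2*(v1*v1)-2*m3*(v1*v2)))), fun x => by rw [e0]; ring⟩)
  obtain ⟨a2, b2, h2⟩ := S Finset.univ (fun j x => μ j * (1/2 * (Mm V s j j + (x - s l) * (V j l * V j l)))) (fun j =>
    ⟨μ j * (1/2 * (Mm V s j j - s l * (V j l * V j l))), μ j * (1/2 * (V j l * V j l)), fun x => by ring⟩)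
  obtain ⟨a3, b3, h3⟩ := S E' (fun e x => w' e * (-(1/2) * ((Mm V s e.1 e.2 + (x - s l) * (V e.1 l * V e.2 l)) + (Mm V s e.2 e.1 + (x - s l) * (V e.2 l * V e.1 l))))) (fun e =>
    ⟨w' e * (-(1/2) * ((Mm V s e.1 e.2 - s l * (V e.1 l * V e.2 l)) + (Mm V s e.2 e.1 - s l * (V e.2 l * V e.1 l)))), w' e * (-(1/2) * (V e.1 l * V e.2 l + V e.2 l * V e.1 l)), fun x => by ring⟩)
  refine ⟨a1 + a2 + a3, b1 + b2 + b3, fun x => ?_⟩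
  rw [h1, h2, h3]; ring

end Gz

namespace Gz
variable {d : Type} [Fintype d] [DecidableEq d] {n : ℕ}

theorem Mm_eq (V : Matrix (Fin n) (Fin n) ℝ) (s : Fin n → ℝ) :
    V * diagonal s * Vᵀ = Matrix.of (Mm V s) := by
  ext j k
  simp [Mm, Matrix.mul_apply, diagonal_apply]

theorem spec (M : Matrix (Fin n) (Fin n) ℝ) (hM : Mᵀ = M) :
    ∃ (V : Matrix (Fin n) (Fin n) ℝ) (s : Fin n → ℝ), V * Vᵀ = 1 ∧ M = Matrix.of (Mm V s) := by
  have hH : M.IsHermitian := by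
    rw [Matrix.IsHermitian, conjTranspose_eq_transpose_of_trivial, hM]
  refine ⟨hH.eigenvectorUnitary, hH.eigenvalues, ?_, ?_⟩
  · have := (Unitary.mem_iff.mp hH.eigenvectorUnitary.2).2
    rwa [star_eq_conjTranspose, conjTranspose_eq_transpose_of_trivial] at this
  · rw [← Mm_eq]
    have := hH.spectral_theorem
    rw [Unitary.conjStarAlgAut_apply] at this
    rw [star_eq_conjTranspose, conjTranspose_eq_transpose_of_trivial] at this
    exact this

theorem Mm_symm (V : Matrix (Fin n) (Fin n) ℝ) (s : Fin n → ℝ) (j k : Fin n) : Mm V s j k = Mm V s k j := by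
  simp only [Mm]
  refine Finset.sum_congr rfl fun x _ => ?_
  ring

theorem sum_Mm (V : Matrix (Fin n) (Fin n) ℝ) (s t : Fin n → ℝ) (hV : V * Vᵀ = 1) :
    ∑ j, ∑ k, Mm V s j k * Mm V t j k = ∑ l, s l * t l := by
  have e : ∑ j, ∑ k, Mm V s j k * Mm V t j k = (Matrix.of (Mm V s) * Matrix.of (Mm V t)).trace := by
    simp only [Matrix.trace, Matrix.diag, Matrix.mul_apply, Matrix.of_apply]
    refine Finset.sum_congr rfl fun x _ => Finset.sum_congr rfl fun y _ => ?_
    rw [Mm_symm V t]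
  have hV' := mul_eq_one_comm.mp hV
  rw [e, ← Mm_eq, ← Mm_eq]
  have : V * diagonal s * Vᵀ * (V * diagonal t * Vᵀ) = V * (diagonal s * diagonal t) * Vᵀ := by
    calc _ = V * diagonal s * (Vᵀ * V) * diagonal t * Vᵀ := by simp only [mul_assoc]
      _ = _ := by rw [hV', mul_one]; simp only [mul_assoc]
  rw [this, trace_mul_comm, ← mul_assoc, hV', one_mul, diagonal_mul_diagonal, trace_diagonal]

theorem psd_Mm (V : Matrix (Fin n) (Fin n) ℝ) (s : Fin n → ℝ) (hs : ∀ l, 0 ≤ s l) :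
    (Matrix.of (Mm V s)).PosSemidef := by
  rw [← Mm_eq]
  have h1 : (diagonal s).PosSemidef := PosSemidef.diagonal (fun l => hs l)
  have := h1.mul_mul_conjTranspose_same V
  rwa [conjTranspose_eq_transpose_of_trivial] at this

theorem nonneg_of_psd (V : Matrix (Fin n) (Fin n) ℝ) (s : Fin n → ℝ) (hV : V * Vᵀ = 1)
    (h : (Matrix.of (Mm V s)).PosSemidef) (l : Fin n) : 0 ≤ s l := by
  have hV' := mul_eq_one_comm.mp hV
  have h1 := h.conjTranspose_mul_mul_same V
  rw [conjTranspose_eq_transpose_of_trivial, ← Mm_eq] at h1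
  have : Vᵀ * (V * diagonal s * Vᵀ) * V = diagonal s := by
    calc _ = (Vᵀ * V) * diagonal s * (Vᵀ * V) := by simp only [mul_assoc]
      _ = _ := by rw [hV']; simp
  rw [this] at h1
  simpa using h1.diag_nonneg (i := l)

theorem Mm_one (V : Matrix (Fin n) (Fin n) ℝ) (hV : V * Vᵀ = 1) (s : Fin n → ℝ) (a : ℝ) :
    Matrix.of (Mm V (fun l => 1 + a * s l)) = 1 + a • Matrix.of (Mm V s) := by
  rw [← Mm_eq, ← Mm_eq]
  have : diagonal (fun l => 1 + a * s l) = 1 + a • diagonal s := by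
    ext j k; by_cases hjk : j = k
    · subst hjk; simp
    · simp [hjk]
  rw [this, mul_add, add_mul, mul_one, hV]; simp

/-- The zero-diagonal contraction. -/
theorem contraction (V : Matrix (Fin n) (Fin n) ℝ) (ε : Fin n → ℝ) (hV : V * Vᵀ = 1)
    (h0 : ∀ j, Mm V ε j j = 0) :
    ∃ (U : Matrix (Fin n) (Fin n) ℝ) (s : Fin n → ℝ), U * Uᵀ = 1 ∧ (∀ l, |s l| ≤ 1) ∧
      (∀ j, Mm U s j j = 0) ∧ ∑ j, ∑ k, Mm V ε j k * Mm U s j k = 1/2 * ∑ l, |ε l| := by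
  set g : Fin n → ℝ := fun l => SignType.sign (ε l) with hg
  have hg1 : ∀ l, |g l| ≤ 1 := by
    intro l
    rcases lt_trichotomy (ε l) 0 with h | h | h <;> simp [hg, h]
  have hgε : ∀ l, ε l * g l = |ε l| := by
    intro l
    simp [hg, self_mul_sign]
  set S := Matrix.of (Mm V g) with hS
  have hp : (1 + (1:ℝ) • S).PosSemidef := by
    rw [← Mm_one V hV]; apply psd_Mm; intro l; have := abs_le.mp (hg1 l); linarith
  have hm : (1 + (-1:ℝ) • S).PosSemidef := by
    rw [← Mm_one V hV]; apply psd_Mm; intro l; have := abs_le.mp (hg1 l); linarith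
  have hd : ∀ j, -1 ≤ S j j ∧ S j j ≤ 1 := by
    intro j
    have a := hp.diag_nonneg (i := j)
    have b := hm.diag_nonneg (i := j)
    simp at a b
    constructor <;> linarith
  have hDp : (1 + (1:ℝ) • diagonal (fun j => S j j)).PosSemidef := by
    have : (1 + (1:ℝ) • diagonal (fun j => S j j)) = diagonal (fun j => 1 + S j j) := by
      rw [one_smul, ← diagonal_one, diagonal_add]
    rw [this]; exact PosSemidef.diagonal (fun j => by have := hd j; simp only [Pi.zero_apply]; linarith)
  have hDm : (1 + (-1:ℝ) • diagonal (fun j => S j j)).PosSemidef := by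
    have : (1 + (-1:ℝ) • diagonal (fun j => S j j)) = diagonal (fun j => 1 + - S j j) := by
      ext j k; by_cases hjk : j = k <;> simp [diagonal_apply, hjk]
    rw [this]; exact PosSemidef.diagonal (fun j => by have := hd j; simp only [Pi.zero_apply]; linarith)
  have hST : Sᵀ = S := by
    ext j k; simp only [transpose_apply, hS, of_apply]; exact Mm_symm _ _ _ _
  obtain ⟨U, s, hU, hUs⟩ := spec ((1/2:ℝ) • (S - diagonal (fun j => S j j))) (by
    rw [transpose_smul, transpose_sub, hST, diagonal_transpose])
  have hent : ∀ j k, Mm U s j k = 1/2 * (Mm V g j k - if j = k then S j j else 0) := by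
    intro j k
    have := congrFun (congrFun hUs j) k
    simp only [of_apply] at this
    rw [← this]
    simp [hS, diagonal_apply]
  refine ⟨U, s, hU, ?_, ?_, ?_⟩
  · intro l
    have a1 : 0 ≤ 1 + 1 * s l := by
      apply nonneg_of_psd U (fun l => 1 + 1 * s l) hU
      rw [Mm_one U hU, ← hUs]
      convert (hp.add hDm).smul (show (0:ℝ) ≤ 1/2 by norm_num) using 1
      ext j k; by_cases hjk : j = k <;> simp [one_apply, diagonal_apply, hjk] <;> ring
    have a2 : 0 ≤ 1 + (-1) * s l := by
      apply nonneg_of_psd U (fun l => 1 + (-1) * s l) hU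
      rw [Mm_one U hU, ← hUs]
      convert (hm.add hDp).smul (show (0:ℝ) ≤ 1/2 by norm_num) using 1
      ext j k; by_cases hjk : j = k <;> simp [one_apply, diagonal_apply, hjk] <;> ring
    rw [abs_le]; constructor <;> linarith
  · intro j; rw [hent]; simp [hS]
  · have : ∀ j k, Mm V ε j k * Mm U s j k = 1/2 * (Mm V ε j k * Mm V g j k) := by
      intro j k
      rw [hent]
      by_cases hjk : j = k
      · subst hjk; simp [h0]
      · simp [hjk]; ring
    simp only [this, ← Finset.mul_sum]
    rw [sum_Mm V ε g hV]
    simp [hgε]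

/-- hopping matrix -/
def hop (E' : Finset (Fin n × Fin n)) (w' : Fin n × Fin n → ℝ) : Matrix (Fin n) (Fin n) ℝ :=
  Matrix.of fun j k => ∑ e ∈ E', (-w' e) * ((if e.1 = j then if e.2 = k then 1 else 0 else 0)
    + (if e.1 = k then if e.2 = j then 1 else 0 else 0))

theorem hop_symm (E' : Finset (Fin n × Fin n)) (w' : Fin n × Fin n → ℝ) : (hop E' w')ᵀ = hop E' w' := by
  ext j k
  simp only [hop, transpose_apply, of_apply]
  refine Finset.sum_congr rfl fun e _ => ?_
  rw [add_comm]

theorem hop_diag (E' : Finset (Fin n × Fin n)) (hE' : ∀ e ∈ E', e.1 < e.2) (w' : Fin n × Fin n → ℝ) (j : Fin n) :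
    hop E' w' j j = 0 := by
  simp only [hop, of_apply]
  refine Finset.sum_eq_zero fun e he => ?_
  have := (hE' e he).ne
  by_cases h1 : e.1 = j
  · have : e.2 ≠ j := by rw [← h1]; exact this.symm
    simp [this]
  · simp [h1]

theorem hop_sum {X : Type} [AddCommGroup X] [Module ℝ X] (E' : Finset (Fin n × Fin n)) (w' : Fin n × Fin n → ℝ)
    (Φ : Fin n → Fin n → X) :
    ∑ j, ∑ k, hop E' w' j k • Φ j k = ∑ e ∈ E', (-w' e) • (Φ e.1 e.2 + Φ e.2 e.1) := by
  simp only [hop, of_apply, Finset.sum_smul]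
  have : ∀ j, ∑ k, ∑ e ∈ E', ((-w' e) * ((if e.1 = j then if e.2 = k then 1 else 0 else 0)
    + (if e.1 = k then if e.2 = j then 1 else 0 else 0))) • Φ j k = ∑ e ∈ E', ∑ k, ((-w' e) * ((if e.1 = j then if e.2 = k then 1 else 0 else 0)
    + (if e.1 = k then if e.2 = j then 1 else 0 else 0))) • Φ j k := fun j => Finset.sum_comm
  simp only [this]
  rw [Finset.sum_comm]
  refine Finset.sum_congr rfl fun e _ => ?_
  simp only [mul_smul, ← Finset.smul_sum, add_smul, Finset.sum_add_distrib]
  congr 1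
  simp [ite_smul]

section
variable {A B : Fin n → Matrix d d ℂ} (h : Maj A B)
include h

theorem Maj.absZ (l : Fin n) (x : ℝ) : (((|x| : ℝ) : ℂ) • (1 : Matrix d d ℂ) - (x : ℂ) • G A B l l).PosSemidef := by
  have key : ∀ y : ℝ, (y = 1 ∨ y = -1) → ((1 : Matrix d d ℂ) + (y : ℂ) • G A B l l).PosSemidef := by
    intro y hy
    have := h.Ppsd (fun _ => y) (fun _ => hy) [l]
    simpa [Pr] using this
  rcases le_total 0 x with hx | hx
  · have := (key (-1) (Or.inr rfl)).smul (show (0:ℂ) ≤ (x:ℂ) by exact_mod_cast hx)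
    rw [abs_of_nonneg hx]
    convert this using 1
    simp [smul_add, sub_eq_add_neg]
  · have := (key 1 (Or.inl rfl)).smul (show (0:ℂ) ≤ ((-x:ℝ):ℂ) by exact_mod_cast (neg_nonneg.mpr hx))
    rw [abs_of_nonpos hx]
    convert this using 1
    simp [smul_add, sub_eq_add_neg]

theorem Maj.hopBound (V : Matrix (Fin n) (Fin n) ℝ) (ε : Fin n → ℝ) (hV : V * Vᵀ = 1) :
    (((∑ l, |ε l| : ℝ) : ℂ) • (1 : Matrix d d ℂ) - ∑ j, ∑ k, (Mm V ε j k) • G A B j k).PosSemidef := by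
  have h' := h.rot (V := V) (mul_eq_one_comm.mp hV)
  have e : ∑ j, ∑ k, (Mm V ε j k) • G A B j k = ∑ l, (ε l : ℂ) • G (Gz.rot V A) (Gz.rot V B) l l := by
    simp only [G, rot_mul, Finset.smul_sum, Mm, Finset.sum_smul]
    have : ∀ j, ∑ k, ∑ l, (V j l * ε l * V k l) • (Complex.I • (A j * B k)) = ∑ l, ∑ k, (V j l * ε l * V k l) • (Complex.I • (A j * B k)) :=
      fun j => Finset.sum_comm
    simp only [this]
    rw [Finset.sum_comm]
    refine Finset.sum_congr rfl fun l _ => Finset.sum_congr rfl fun j _ => Finset.sum_congr rfl fun k _ => ?_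
    rw [← Complex.coe_smul]
    simp only [smul_smul]
    congr 1
    push_cast; ring
  rw [e]
  have e2 : (((∑ l, |ε l| : ℝ) : ℂ) • (1 : Matrix d d ℂ) - ∑ l, (ε l : ℂ) • G (Gz.rot V A) (Gz.rot V B) l l)
     = ∑ l, (((|ε l| : ℝ) : ℂ) • (1 : Matrix d d ℂ) - (ε l : ℂ) • G (Gz.rot V A) (Gz.rot V B) l l) := by
    rw [Finset.sum_sub_distrib, ← Finset.sum_smul]; push_cast; rfl
  rw [e2]
  exact posSemidef_sum _ (fun l _ => h'.absZ l (ε l))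

end

theorem spec_le (H : Matrix d d ℂ) (b x : ℝ) (hp : ((b:ℂ) • (1 : Matrix d d ℂ) - H).PosSemidef)
    (hx : (x : ℂ) ∈ spectrum ℂ H) : x ≤ b := by
  rw [← Matrix.spectrum_toLin', ← Module.End.hasEigenvalue_iff_mem_spectrum] at hx
  obtain ⟨v, hv⟩ := hx.exists_hasEigenvector
  have hv1 := hv.apply_eq_smul
  rw [toLin'_apply] at hv1
  have h1 := hp.dotProduct_mulVec_nonneg v
  rw [sub_mulVec, hv1, smul_mulVec, one_mulVec, ← sub_smul, dotProduct_smul, smul_eq_mul] at h1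
  have h2 : 0 < star v ⬝ᵥ v := dotProduct_star_self_pos_iff.mpr hv.2
  have h3 : (0:ℂ) ≤ (b:ℂ) - x := by
    by_contra hc
    have h4 : ((b - x : ℝ) : ℂ) < 0 := by
      have : ¬ (0:ℝ) ≤ b - x := by
        intro hh; apply hc; exact_mod_cast hh
      exact_mod_cast (not_le.mp this)
    have := mul_neg_of_neg_of_pos h4 h2
    push_cast at this
    exact absurd h1 (not_le_of_gt this)
  have : (0:ℝ) ≤ b - x := by exact_mod_cast h3
  linarith

end Gz

namespace Gz
variable {n : ℕ} 

/-- mode/flavour indexing -/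
def idx (n : ℕ) : Fin n × Fin 2 ≃ Fin (2*n) := finProdFinEquiv.trans (finCongr (mul_comm n 2))

theorem idx_val (j : Fin n) (b : Fin 2) : (idx n (j, b)).val = b.val + 2 * j.val := by
  simp [idx, finProdFinEquiv]

theorem idx_zero (j : Fin n) (hh : 2 * j.val < 2 * n) : (⟨2 * j.val, hh⟩ : Fin (2*n)) = idx n (j, 0) := by
  apply Fin.ext; rw [idx_val]; simp

theorem idx_one (j : Fin n) (hh : 2 * j.val + 1 < 2 * n) : (⟨2 * j.val + 1, hh⟩ : Fin (2*n)) = idx n (j, 1) := by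
  apply Fin.ext; rw [idx_val]; simp [add_comm]

/-- doubled rotation -/
def Rm (V : Matrix (Fin n) (Fin n) ℝ) : Matrix (Fin (2*n)) (Fin (2*n)) ℝ :=
  Matrix.reindex (idx n) (idx n) (Matrix.kroneckerMap (· * ·) Vᵀ (1 : Matrix (Fin 2) (Fin 2) ℝ))

theorem Rm_mul (V : Matrix (Fin n) (Fin n) ℝ) (hV : V * Vᵀ = 1) : Rm V * (Rm V)ᵀ = 1 := by
  have hV' := mul_eq_one_comm.mp hV
  rw [Rm, Matrix.transpose_reindex, reindex_apply, reindex_apply, submatrix_mul_equiv,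
    ← kroneckerMap_transpose, ← mul_kronecker_mul]
  simp [hV']

theorem Rm_det (V : Matrix (Fin n) (Fin n) ℝ) (hV : V * Vᵀ = 1) : (Rm V).det = 1 := by
  rw [Rm, Matrix.det_reindex_self, Matrix.det_kronecker]
  have := congrArg Matrix.det hV
  rw [det_mul, det_transpose, det_one] at this
  simp [pow_two, this]

variable {c : Fin (2*n) → Matrix (Fin (2^n)) (Fin (2^n)) ℂ}

theorem majA_eq (j : Fin n) : majA n c j = c (idx n (j, 0)) := by rw [majA, idx_zero]
theorem majB_eq (j : Fin n) : majB n c j = c (idx n (j, 1)) := by rw [majB, idx_one]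

theorem Rm_row (V : Matrix (Fin n) (Fin n) ℝ) (j : Fin n) (b : Fin 2) :
    ∑ k, ((Rm V (idx n (j, b)) k : ℝ) : ℂ) • c k = rot V (fun k => c (idx n (k, b))) j := by
  rw [← (idx n).sum_comp, Fintype.sum_prod_type]
  simp only [Rm, reindex_apply, submatrix_apply, Equiv.symm_apply_apply, kroneckerMap_apply, rot, transpose_apply]
  refine Finset.sum_congr rfl fun k _ => ?_
  simp [one_apply, ite_smul]

theorem maj_of (hc : IsMajorana n c) : Maj (majA n c) (majB n c) := by
  obtain ⟨h1, h2⟩ := hc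
  refine ⟨fun j => h1 _, fun j => h1 _, ?_, ?_, ?_⟩
  · intro j k; rw [majA_eq, majA_eq, h2]; simp
  · intro j k; rw [majB_eq, majB_eq, h2]; simp
  · intro j k; rw [majA_eq, majB_eq, h2]; simp

theorem gauss_eq (V : Matrix (Fin n) (Fin n) ℝ) (s : Fin n → ℝ) :
    gaussOf n c s (Rm V) = ((2:ℂ)^n)⁻¹ • Pr (rot V (majA n c)) (rot V (majB n c)) s (List.finRange n) := by
  have ea : majA n c = fun k => c (idx n (k, 0)) := funext majA_eq
  have eb : majB n c = fun k => c (idx n (k, 1)) := funext majB_eq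
  simp only [gaussOf, Pr, idx_zero, idx_one, Rm_row, G, ea, eb, smul_smul, mul_comm Complex.I]

theorem gauss_eig (hc : IsMajorana n c) (V : Matrix (Fin n) (Fin n) ℝ) (hV : V * Vᵀ = 1) (s : Fin n → ℝ)
    (hs : ∀ j, s j = 1 ∨ s j = -1) : Eig (rot V (majA n c)) (rot V (majB n c)) s (gaussOf n c s (Rm V)) := by
  have h' := (maj_of hc).rot (V := V) (mul_eq_one_comm.mp hV)
  rw [gauss_eq]
  refine ⟨?_, ?_, ?_⟩
  · rw [trace_smul, h'.trP s _ (List.nodup_finRange n)]; simp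
  · intro l
    rw [mul_smul_comm, h'.ZP s hs _ l (List.mem_finRange l), smul_comm]
  · intro l
    rw [smul_mul_assoc, ← h'.PZ, h'.ZP s hs _ l (List.mem_finRange l), smul_comm]

theorem gauss_pure (V : Matrix (Fin n) (Fin n) ℝ) (hV : V * Vᵀ = 1) (s : Fin n → ℝ)
    (hs : ∀ j, s j = 1 ∨ s j = -1) : IsPureGaussianState n c (gaussOf n c s (Rm V)) :=
  ⟨s, Rm V, hs, Rm_mul V hV, Rm_det V hV, rfl⟩

theorem num_eq (hc : IsMajorana n c) (j : Fin n) :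
    num n c j = ((1:ℂ)/2) • (1 + G (majA n c) (majB n c) j j) := by
  have h := maj_of hc
  simp only [num, ann, conjTranspose_smul, conjTranspose_add, h.hA, h.hB, smul_mul_smul_comm, add_mul, mul_add, smul_mul_assoc, mul_smul_comm, h.A2, h.B2, h.BA, G, smul_neg, smul_smul]
  simp only [RCLike.star_def, Complex.conj_I, map_div₀, map_one, map_ofNat]
  match_scalars <;> ring_nf <;> simp <;> ring_nf

theorem hop_eq (hc : IsMajorana n c) (j k : Fin n) (hjk : j ≠ k) :
    -((ann n c j)ᴴ * ann n c k) - (ann n c k)ᴴ * ann n c j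
      = (-((1:ℂ)/2)) • (G (majA n c) (majB n c) j k + G (majA n c) (majB n c) k j) := by
  have h := maj_of hc
  simp only [ann, conjTranspose_smul, conjTranspose_add, h.hA, h.hB, smul_mul_smul_comm, add_mul, mul_add, smul_mul_assoc, mul_smul_comm, h.BA, h.AAn hjk, h.BBn hjk, G, smul_neg, smul_smul]
  simp only [RCLike.star_def, Complex.conj_I, map_div₀, map_one, map_ofNat]
  match_scalars <;> ring_nf <;> simp <;> ring_nf

theorem int_eq (hc : IsMajorana n c) (j k : Fin n) :
    ((1:ℂ)/4) • 1 - num n c j * num n c k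
      = (-((1:ℂ)/4)) • (G (majA n c) (majB n c) j j + G (majA n c) (majB n c) k k 
        + G (majA n c) (majB n c) j j * G (majA n c) (majB n c) k k) := by
  rw [num_eq hc, num_eq hc, smul_mul_smul_comm]
  simp only [add_mul, mul_add, mul_one, one_mul]
  match_scalars <;> ring

theorem H_eq (hc : IsMajorana n c)
    (E E' : Finset (Fin n × Fin n)) (hE' : ∀ e ∈ E', e.1 < e.2)
    (w : Fin n × Fin n → ℝ) (w' : Fin n × Fin n → ℝ) (μ : Fin n → ℝ) :
    ∑ e ∈ E, (w e : ℂ) • (((1:ℂ)/4) • 1 - num n c e.1 * num n c e.2)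
        + ∑ j, (μ j : ℂ) • (num n c j - ((1:ℂ)/2) • 1)
        + ∑ e ∈ E', (w' e : ℂ) •
            (-((ann n c e.1)ᴴ * ann n c e.2) - (ann n c e.2)ᴴ * ann n c e.1)
    = ∑ e ∈ E, (w e : ℂ) • ((-((1:ℂ)/4)) • (G (majA n c) (majB n c) e.1 e.1 + G (majA n c) (majB n c) e.2 e.2
        + G (majA n c) (majB n c) e.1 e.1 * G (majA n c) (majB n c) e.2 e.2))
        + ∑ j, (μ j : ℂ) • (((1:ℂ)/2) • G (majA n c) (majB n c) j j)
        + ∑ e ∈ E', (w' e : ℂ) • ((-((1:ℂ)/2)) • (G (majA n c) (majB n c) e.1 e.2 + G (majA n c) (majB n c) e.2 e.1)) := by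
  congr 1
  · congr 1
    · exact Finset.sum_congr rfl fun e _ => by rw [int_eq hc]
    · exact Finset.sum_congr rfl fun j _ => by rw [num_eq hc, smul_add, add_sub_cancel_left]
  · exact Finset.sum_congr rfl fun e he => by rw [hop_eq hc _ _ (hE' e he).ne]

theorem trH (hc : IsMajorana n c)
    (E E' : Finset (Fin n × Fin n)) (hE : ∀ e ∈ E, e.1 < e.2) 
    (w : Fin n × Fin n → ℝ) (w' : Fin n × Fin n → ℝ) (μ : Fin n → ℝ) 
    (V : Matrix (Fin n) (Fin n) ℝ) (hV : V * Vᵀ = 1) (s : Fin n → ℝ)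
    (hs : ∀ j, s j = 1 ∨ s j = -1) :
    (gaussOf n c s (Rm V) * (∑ e ∈ E, (w e : ℂ) • ((-((1:ℂ)/4)) • (G (majA n c) (majB n c) e.1 e.1 + G (majA n c) (majB n c) e.2 e.2
        + G (majA n c) (majB n c) e.1 e.1 * G (majA n c) (majB n c) e.2 e.2))
        + ∑ j, (μ j : ℂ) • (((1:ℂ)/2) • G (majA n c) (majB n c) j j)
        + ∑ e ∈ E', (w' e : ℂ) • ((-((1:ℂ)/2)) • (G (majA n c) (majB n c) e.1 e.2 + G (majA n c) (majB n c) e.2 e.1)))).trace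
     = (Fe E E' w w' μ V s : ℂ) := by
  have h := maj_of hc
  have hρ := gauss_eig hc V hV s hs
  simp only [mul_add, Finset.mul_sum, trace_add, trace_sum, mul_smul_comm, trace_smul, trG h hV hρ, smul_eq_mul, Fe]
  push_cast
  congr 2
  refine Finset.sum_congr rfl fun e he => ?_
  rw [trGG h hV hρ _ _ (hE e he).ne]
  push_cast; ring

theorem Mm_id (s : Fin n → ℝ) (j k : Fin n) : Mm 1 s j k = if j = k then s j else 0 := by
  have := congrFun (congrFun (Mm_eq 1 s) j) k
  rw [of_apply] at this
  rw [← this, transpose_one, mul_one, one_mul, diagonal_apply]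

theorem Fe_id (E E' : Finset (Fin n × Fin n)) (hE : ∀ e ∈ E, e.1 < e.2) (hE' : ∀ e ∈ E', e.1 < e.2)
    (w : Fin n × Fin n → ℝ) (w' : Fin n × Fin n → ℝ) (μ : Fin n → ℝ) (s : Fin n → ℝ) :
    Fe E E' w w' μ 1 s = ∑ e ∈ E, w e * (-(1/4) * (s e.1 + s e.2 + s e.1 * s e.2)) + ∑ j, μ j * (1/2 * s j) := by
  simp only [Fe, Mm_id, if_true]
  rw [Finset.sum_eq_zero (s := E'), add_zero]
  · congr 1
    refine Finset.sum_congr rfl fun e he => ?_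
    rw [if_neg (hE e he).ne]; ring
  · intro e he
    rw [if_neg (hE' e he).ne, if_neg (hE' e he).ne']; ring

theorem classical_bound (hc : IsMajorana n c)
    (E E' : Finset (Fin n × Fin n)) (hE : ∀ e ∈ E, e.1 < e.2) (hE' : ∀ e ∈ E', e.1 < e.2)
    (w : Fin n × Fin n → ℝ) (w' : Fin n × Fin n → ℝ) (μ : Fin n → ℝ) (b : ℝ)
    (hb : ∀ s : Fin n → ℝ, (∀ j, s j = 1 ∨ s j = -1) → Fe E E' w w' μ 1 s ≤ b) :
    ((b:ℂ) • (1 : Matrix (Fin (2^n)) (Fin (2^n)) ℂ) - (∑ e ∈ E, (w e : ℂ) • ((-((1:ℂ)/4)) • (G (majA n c) (majB n c) e.1 e.1 + G (majA n c) (majB n c) e.2 e.2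
        + G (majA n c) (majB n c) e.1 e.1 * G (majA n c) (majB n c) e.2 e.2))
        + ∑ j, (μ j : ℂ) • (((1:ℂ)/2) • G (majA n c) (majB n c) j j))).PosSemidef := by
  have h := maj_of hc
  apply Maj.psd_of h _ (List.finRange n) (List.nodup_finRange n)
  intro s hs
  set P := Pr (majA n c) (majB n c) s (List.finRange n) with hP
  have hZ : ∀ l, P * G (majA n c) (majB n c) l l = (s l : ℂ) • P := fun l => by
    rw [hP, ← h.PZ, h.ZP s hs _ l (List.mem_finRange l)]
  have key : P * ((b:ℂ) • (1 : Matrix (Fin (2^n)) (Fin (2^n)) ℂ) - (∑ e ∈ E, (w e : ℂ) • ((-((1:ℂ)/4)) • (G (majA n c) (majB n c) e.1 e.1 + G (majA n c) (majB n c) e.2 e.2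
        + G (majA n c) (majB n c) e.1 e.1 * G (majA n c) (majB n c) e.2 e.2))
        + ∑ j, (μ j : ℂ) • (((1:ℂ)/2) • G (majA n c) (majB n c) j j))) = ((b - Fe E E' w w' μ 1 s : ℝ) : ℂ) • P := by
    rw [Fe_id E E' hE hE']
    simp only [mul_sub, mul_add, Finset.mul_sum, mul_smul_comm, ← mul_assoc, hZ, smul_mul_assoc, mul_one]
    push_cast
    rw [sub_smul, add_smul, Finset.sum_smul, Finset.sum_smul]
    congr 2
    · refine Finset.sum_congr rfl fun e _ => ?_
      simp only [smul_smul, ← add_smul]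
      congr 1; ring
    · refine Finset.sum_congr rfl fun e _ => ?_
      simp only [smul_smul]
      congr 1; ring
  rw [key]
  apply (h.Ppsd s hs _).smul
  have := hb s hs
  exact_mod_cast (sub_nonneg.mpr this)

theorem main_aux (hc : IsMajorana n c)
    (E E' : Finset (Fin n × Fin n)) (hE : ∀ e ∈ E, e.1 < e.2) (hE' : ∀ e ∈ E', e.1 < e.2)
    (w : Fin n × Fin n → ℝ) (hw : ∀ e ∈ E, 0 ≤ w e)
    (w' : Fin n × Fin n → ℝ) (μ : Fin n → ℝ)
    (H : Matrix (Fin (2^n)) (Fin (2^n)) ℂ)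
    (hH : H = ∑ e ∈ E, (w e : ℂ) • (((1:ℂ)/4) • 1 - num n c e.1 * num n c e.2)
        + ∑ j, (μ j : ℂ) • (num n c j - ((1:ℂ)/2) • 1)
        + ∑ e ∈ E', (w' e : ℂ) •
            (-((ann n c e.1)ᴴ * ann n c e.2) - (ann n c e.2)ᴴ * ann n c e.1)) :
    ∃ ρ : Matrix (Fin (2^n)) (Fin (2^n)) ℂ,
      IsPureGaussianState n c ρ ∧
      (((1:ℝ)/3 * lamMax H : ℝ) : ℂ) ≤ (ρ * H).trace := by
  have h := maj_of hc
  rw [H_eq hc E E' hE'] at hH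
  -- best classical state
  obtain ⟨b0, hb0⟩ := Finite.exists_max (fun b : Fin n → Bool => Fe E E' w w' μ 1 (fun j => if b j then 1 else -1))
  set z : Fin n → ℝ := fun j => if b0 j then 1 else -1 with hz
  have hzs : ∀ j, z j = 1 ∨ z j = -1 := by
    intro j; by_cases hj : b0 j <;> simp [hz, hj]
  have hmax : ∀ s : Fin n → ℝ, (∀ j, s j = 1 ∨ s j = -1) → Fe E E' w w' μ 1 s ≤ Fe E E' w w' μ 1 z := by
    intro s hs
    have := hb0 (fun j => decide (s j = 1))
    have es : s = fun j => if decide (s j = 1) = true then 1 else -1 := by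
      funext j
      rcases hs j with q | q
      · simp [q]
      · rw [q]; norm_num
    rw [es]; exact this
  have hCl := classical_bound hc E E' hE hE' w w' μ _ hmax
  -- hopping state
  obtain ⟨V, ε, hV, hVε⟩ := spec (hop E' w') (hop_symm E' w')
  have hVe : ∀ j k, Mm V ε j k = hop E' w' j k := fun j k => by rw [hVε, of_apply]
  obtain ⟨U, s, hU, hs1, hs0, hsum⟩ := contraction V ε hV (fun j => by rw [hVe, hop_diag E' hE'])
  set K := ∑ l, |ε l| with hK
  have hK0 : 0 ≤ K := Finset.sum_nonneg fun l _ => abs_nonneg _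
  have hFU : K / 4 ≤ Fe E E' w w' μ U s := by
    have e3 : ∑ e ∈ E', w' e * (-(1/2) * (Mm U s e.1 e.2 + Mm U s e.2 e.1)) = K / 4 := by
      have := hop_sum E' w' (Mm U s)
      simp only [← hVe, smul_eq_mul] at this
      rw [hsum] at this
      have e4 : ∑ e ∈ E', w' e * (-(1/2) * (Mm U s e.1 e.2 + Mm U s e.2 e.1)) = 1/2 * ∑ e ∈ E', -w' e * (Mm U s e.1 e.2 + Mm U s e.2 e.1) := by
        rw [Finset.mul_sum]; exact Finset.sum_congr rfl fun e _ => by ring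
      rw [e4, ← this]; ring
    rw [Fe, e3]
    simp only [hs0]
    have : 0 ≤ ∑ e ∈ E, w e * (-(1/4) * (0 + 0 + (0 * 0 - Mm U s e.1 e.2 * Mm U s e.1 e.2))) := by
      refine Finset.sum_nonneg fun e he => mul_nonneg (hw e he) ?_
      nlinarith [mul_self_nonneg (Mm U s e.1 e.2)]
    simp only [mul_zero, Finset.sum_const_zero] at this ⊢
    linarith
  obtain ⟨t, ht, hst⟩ := vertex (Fe E E' w w' μ U) (fun s l => Fe_affine E E' w w' μ U s l) s hs1
  -- upper bound
  have hT := (h.hopBound V ε hV).smul (show (0:ℂ) ≤ ((1/2 : ℝ) : ℂ) by exact_mod_cast (by norm_num : (0:ℝ) ≤ 1/2))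
  have hTe : ∑ e ∈ E', (w' e : ℂ) • ((-((1:ℂ)/2)) • (G (majA n c) (majB n c) e.1 e.2 + G (majA n c) (majB n c) e.2 e.1))
      = ((1/2 : ℝ) : ℂ) • ∑ j, ∑ k, (Mm V ε j k) • G (majA n c) (majB n c) j k := by
    simp only [hVe]
    rw [hop_sum, Finset.smul_sum]
    refine Finset.sum_congr rfl fun e _ => ?_
    rw [← Complex.coe_smul]
    simp only [smul_smul]
    congr 1
    push_cast; ring
  have hub := hCl.add hT
  have hub' : (((Fe E E' w w' μ 1 z + K / 2 : ℝ) : ℂ) • (1 : Matrix (Fin (2^n)) (Fin (2^n)) ℂ) - H).PosSemidef := by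
    convert hub using 1
    rw [hH, hTe, smul_sub, smul_smul]
    push_cast
    rw [add_smul]
    have : (1/2 : ℂ) * ∑ l, ((|ε l| : ℝ) : ℂ) = (K : ℂ) / 2 := by rw [hK]; push_cast; ring
    rw [this]
    abel
  have hlam : lamMax H ≤ max 0 (Fe E E' w w' μ 1 z + K / 2) := by
    apply Real.sSup_le _ (le_max_left _ _)
    intro x hx
    exact le_max_of_le_right (spec_le H _ x hub' hx)
  rcases le_total (Fe E E' w w' μ 1 z) (Fe E E' w w' μ U t) with hle | hle
  · refine ⟨gaussOf n c t (Rm U), gauss_pure U hU t ht, ?_⟩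
    rw [hH, trH hc E E' hE w w' μ U hU t ht, ← hH]
    rw [Complex.real_le_real]
    rcases max_cases 0 (Fe E E' w w' μ 1 z + K / 2) with q | q <;> linarith
  · refine ⟨gaussOf n c z (Rm 1), gauss_pure 1 (by simp) z hzs, ?_⟩
    rw [hH, trH hc E E' hE w w' μ 1 (by simp) z hzs, ← hH]
    rw [Complex.real_le_real]
    rcases max_cases 0 (Fe E E' w w' μ 1 z + K / 2) with q | q <;> linarith

end Gz

/-- For a traceless classically interacting fermionic Hamiltonian, there is a
pure fermionic Gaussian state achieving approximation ratio `1/3`. -/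
theorem traceless_CIFH_gaussian_one_third
    (n : ℕ) (hn : 1 ≤ n)
    (c : Fin (2*n) → Matrix (Fin (2^n)) (Fin (2^n)) ℂ) (hc : IsMajorana n c)
    (E E' : Finset (Fin n × Fin n))
    (hE : ∀ e ∈ E, e.1 < e.2) (hE' : ∀ e ∈ E', e.1 < e.2)
    (w : Fin n × Fin n → ℝ) (hw : ∀ e ∈ E, 0 ≤ w e)
    (w' : Fin n × Fin n → ℝ) (μ : Fin n → ℝ)
    (H : Matrix (Fin (2^n)) (Fin (2^n)) ℂ)
    (hH : H = ∑ e ∈ E, (w e : ℂ) • (((1:ℂ)/4) • 1 - num n c e.1 * num n c e.2)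
        + ∑ j, (μ j : ℂ) • (num n c j - ((1:ℂ)/2) • 1)
        + ∑ e ∈ E', (w' e : ℂ) •
            (-((ann n c e.1)ᴴ * ann n c e.2) - (ann n c e.2)ᴴ * ann n c e.1)) :
    ∃ ρ : Matrix (Fin (2^n)) (Fin (2^n)) ℂ,
      IsPureGaussianState n c ρ ∧
      (((1:ℝ)/3 * lamMax H : ℝ) : ℂ) ≤ (ρ * H).trace := by
  exact Gz.main_aux hc E E' hE hE' w hw w' μ H hH

end
end

section
/- Let n ≥ 1 and let c_1, …, c_{2n} ∈ ℂ^{2^n × 2^n} be Majorana operators. Let H = H_class + H_quad where H_class = Σ_{(j,k)∈E} w_{jk}(1/4 − n_j n_k) + Σ_{j∈V} μ_j (n_j − 1/2) and H_quad = Σ_{(j,k)∈E'} w'_{jk}(−a_j† a_k − a_k† a_j), with w_{jk} ≥ 0, w'_{jk} ∈ ℝ, μ_j ∈ ℝ. Then (λ_max(H_class) + λ_max(H_quad))/3 ≤ λ_max(H) ≤ λ_max(H_class) + λ_max(H_quad). -/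
open Matrix
open scoped ComplexOrder

noncomputable section

namespace CIFH

set_option linter.unusedSectionVars false

section lam
variable {m : Type} [Fintype m] [DecidableEq m]

lemma trace_mul_nonneg {ρ N : Matrix m m ℂ} (hρ : ρ.PosSemidef) (hN : N.PosSemidef) :
    0 ≤ (trace (ρ * N)).re := by
  obtain ⟨C, hC⟩ : ∃ C : Matrix m m ℂ, ρ = Cᴴ * C := by
    open scoped MatrixOrder in
    exact CStarAlgebra.nonneg_iff_eq_star_mul_self.mp hρ.nonneg
  rw [hC, Matrix.mul_assoc, trace_mul_comm]
  exact (Complex.le_def.mp (hN.mul_mul_conjTranspose_same C).trace_nonneg).1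

lemma spec_set {M : Matrix m m ℂ} (hM : M.IsHermitian) :
    {x : ℝ | (x : ℂ) ∈ spectrum ℂ M} = Set.range hM.eigenvalues := by
  rw [← hM.spectrum_real_eq_range_eigenvalues]
  ext x
  exact spectrum.algebraMap_mem_iff ℂ (R := ℝ) (r := x) (a := M)

lemma eig_le {M : Matrix m m ℂ} (hM : M.IsHermitian) (i : m) : hM.eigenvalues i ≤ lamMax M := by
  unfold lamMax
  rw [spec_set hM]
  exact le_csSup (Set.finite_range _).bddAbove ⟨i, rfl⟩

lemma trace_le {M ρ : Matrix m m ℂ} (hM : M.IsHermitian) (hρ : ρ.PosSemidef) :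
    (trace (ρ * M)).re ≤ lamMax M * (trace ρ).re := by
  have h : (((lamMax M : ℝ) : ℂ) • (1 : Matrix m m ℂ) - M).PosSemidef := by
    rw [posSemidef_iff_isHermitian_and_spectrum_nonneg]
    refine ⟨?_, ?_⟩
    · apply IsHermitian.sub _ hM
      simp [IsHermitian, conjTranspose_smul]
    · have h1 : ((lamMax M : ℝ) : ℂ) • (1 : Matrix m m ℂ) =
        algebraMap ℂ (Matrix m m ℂ) ((lamMax M : ℝ) : ℂ) := by
        rw [Algebra.algebraMap_eq_smul_one]
      rw [h1, ← spectrum.singleton_sub_eq, hM.spectrum_eq_image_range]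
      rintro _ ⟨a, rfl, _, ⟨_, ⟨i, rfl⟩, rfl⟩, rfl⟩
      have := eig_le hM i
      simp only [Set.mem_ofPred_eq, sub_nonneg]
      simpa using this
  have := trace_mul_nonneg hρ h
  rw [mul_sub, trace_sub, mul_smul_comm, mul_one, trace_smul] at this
  simp only [smul_eq_mul, Complex.sub_re, Complex.re_ofReal_mul] at this
  linarith

lemma exists_top [Nonempty m] {M : Matrix m m ℂ} (hM : M.IsHermitian) :
    ∃ ρ : Matrix m m ℂ, ρ.PosSemidef ∧ trace ρ = 1 ∧ trace (ρ * M) = (lamMax M : ℝ) := by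
  have h : lamMax M ∈ Set.range hM.eigenvalues := by
    unfold lamMax
    rw [spec_set hM]
    exact (Set.range_nonempty _).csSup_mem (Set.finite_range _)
  obtain ⟨i, hi⟩ := h
  set v : m → ℂ := ⇑(hM.eigenvectorBasis i) with hv
  have hMv : M *ᵥ v = hM.eigenvalues i • v := hM.mulVec_eigenvectorBasis i
  have hn : v ⬝ᵥ star v = 1 := by
    have := hM.eigenvectorBasis.orthonormal.1 i
    have h2 : inner ℂ (hM.eigenvectorBasis i) (hM.eigenvectorBasis i) = (1:ℂ) := by
      rw [inner_self_eq_norm_sq_to_K, this]; simp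
    rw [EuclideanSpace.inner_eq_star_dotProduct] at h2
    exact h2
  refine ⟨vecMulVec v (star v), posSemidef_vecMulVec_self_star v, ?_, ?_⟩
  · rw [trace_vecMulVec, hn]
  · rw [trace_mul_comm, mul_vecMulVec, trace_vecMulVec, hMv, smul_dotProduct, hn, ← hi]
    simp

end lam

section cliff
variable {ι m : Type} [Fintype ι] [DecidableEq ι] [Fintype m] [DecidableEq m]

/-- Two families of Majorana operators. -/
structure Maj (A B : ι → Matrix m m ℂ) : Prop where
  hA : ∀ j, (A j)ᴴ = A j
  hB : ∀ j, (B j)ᴴ = B j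
  AA : ∀ j k, A j * A k + A k * A j = (if j = k then (2:ℂ) else 0) • (1 : Matrix m m ℂ)
  BB : ∀ j k, B j * B k + B k * B j = (if j = k then (2:ℂ) else 0) • (1 : Matrix m m ℂ)
  BA : ∀ j k, B j * A k = - (A k * B j)

variable {A B : ι → Matrix m m ℂ}

lemma Maj.A2 (h : Maj A B) (j : ι) : A j * A j = 1 := by
  have := h.AA j j
  simp only [if_true, ← two_smul ℂ (A j * A j)] at this
  exact smul_right_injective _ (two_ne_zero) this

lemma Maj.B2 (h : Maj A B) (j : ι) : B j * B j = 1 := by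
  have := h.BB j j
  simp only [if_true, ← two_smul ℂ (B j * B j)] at this
  exact smul_right_injective _ (two_ne_zero) this

lemma Maj.AAne (h : Maj A B) {j k : ι} (hjk : j ≠ k) : A j * A k = -(A k * A j) := by
  have := h.AA j k
  simp only [hjk, if_false, zero_smul] at this
  exact eq_neg_of_add_eq_zero_left this

lemma Maj.BBne (h : Maj A B) {j k : ι} (hjk : j ≠ k) : B j * B k = -(B k * B j) := by
  have := h.BB j k
  simp only [hjk, if_false, zero_smul] at this
  exact eq_neg_of_add_eq_zero_left this

/-- `i A_j B_k`. -/
def K (A B : ι → Matrix m m ℂ) (j k : ι) : Matrix m m ℂ := Complex.I • (A j * B k)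

lemma Maj.K_herm (h : Maj A B) (j k : ι) : (K A B j k)ᴴ = K A B j k := by
  simp [K, conjTranspose_smul, conjTranspose_mul, h.hA, h.hB, h.BA]

lemma Maj.K_sq (h : Maj A B) (j k : ι) : K A B j k * K A B j k = 1 := by
  have : A j * B k * (A j * B k) = -1 := by
    calc A j * B k * (A j * B k) = A j * (B k * A j) * B k := by noncomm_ring
      _ = -((A j * A j) * (B k * B k)) := by rw [h.BA]; noncomm_ring
      _ = -1 := by rw [h.A2, h.B2, one_mul]
  rw [K, smul_mul_smul_comm, this]; simp

lemma Maj.Z_A (h : Maj A B) (l : ι) : K A B l l * A l = -(A l * K A B l l) := by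
  simp [K, mul_assoc, h.BA]

lemma Maj.Z_B (h : Maj A B) (l : ι) : K A B l l * B l = Complex.I • A l := by
  simp [K, mul_assoc, h.B2]

lemma Maj.B_Z (h : Maj A B) (l : ι) : B l * K A B l l = -(Complex.I • A l) := by
  simp only [K, mul_smul_comm, ← mul_assoc, h.BA]
  simp [mul_assoc, h.B2]

lemma Maj.Z_A_ne (h : Maj A B) {l k : ι} (hk : k ≠ l) : K A B l l * A k = A k * K A B l l := by
  simp only [K, mul_smul_comm, smul_mul_assoc]
  rw [mul_assoc, h.BA, mul_neg, ← mul_assoc, h.AAne hk.symm, neg_mul, neg_neg, mul_assoc]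

lemma Maj.Z_B_ne (h : Maj A B) {l k : ι} (hk : k ≠ l) : K A B l l * B k = B k * K A B l l := by
  simp only [K, mul_smul_comm, smul_mul_assoc]
  rw [mul_assoc, h.BBne hk.symm, mul_neg, ← mul_assoc, ← mul_assoc, h.BA, neg_mul]

lemma Maj.rot {κ : Type} [Fintype κ] [DecidableEq κ] (h : Maj A B) (U : Matrix ι κ ℝ) (hU : Uᵀ * U = 1) :
    Maj (fun l => ∑ k, ((U k l : ℝ) : ℂ) • A k) (fun l => ∑ k, ((U k l : ℝ) : ℂ) • B k) := by
  have key : ∀ C : ι → Matrix m m ℂ,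
      (∀ j k, C j * C k + C k * C j = (if j = k then (2:ℂ) else 0) • (1 : Matrix m m ℂ)) →
      ∀ j k, (∑ x, ((U x j : ℝ) : ℂ) • C x) * (∑ x, ((U x k : ℝ) : ℂ) • C x) +
        (∑ x, ((U x k : ℝ) : ℂ) • C x) * (∑ x, ((U x j : ℝ) : ℂ) • C x) =
        (if j = k then (2:ℂ) else 0) • (1 : Matrix m m ℂ) := by
    intro C hC j k
    have e1 : (∑ x, ((U x j : ℝ) : ℂ) • C x) * (∑ x, ((U x k : ℝ) : ℂ) • C x) +
        (∑ x, ((U x k : ℝ) : ℂ) • C x) * (∑ x, ((U x j : ℝ) : ℂ) • C x) =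
        ∑ x, ∑ y, (((U x j : ℝ) : ℂ) * ((U y k : ℝ) : ℂ)) • (C x * C y + C y * C x) := by
      simp only [smul_add, Finset.sum_add_distrib]
      congr 1
      · simp only [Finset.sum_mul_sum, smul_mul_smul_comm]
      · rw [Finset.sum_comm]
        simp only [Finset.sum_mul_sum, smul_mul_smul_comm]
        refine Finset.sum_congr rfl fun x _ => Finset.sum_congr rfl fun y _ => ?_
        rw [mul_comm ((U x k : ℝ) : ℂ)]
    rw [e1]
    simp only [hC, ite_smul, zero_smul, smul_ite, smul_zero, Finset.sum_ite_eq,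
      Finset.mem_univ, if_true, ← Finset.sum_smul, smul_smul]
    have e2 := congrFun (congrFun hU j) k
    simp only [mul_apply, transpose_apply, one_apply] at e2
    have e3 : ∑ x, ((U x j : ℝ) : ℂ) * ((U x k : ℝ) : ℂ) = if j = k then 1 else 0 := by
      have := congrArg (fun r : ℝ => (r : ℂ)) e2
      push_cast at this
      rw [this]; split_ifs <;> simp
    rw [← Finset.sum_mul, e3]
    split_ifs <;> simp
  refine ⟨?_, ?_, key A h.AA, key B h.BB, ?_⟩
  · intro j; simp [conjTranspose_sum, conjTranspose_smul, h.hA]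
  · intro j; simp [conjTranspose_sum, conjTranspose_smul, h.hB]
  · intro j k
    simp only [Finset.sum_mul_sum, smul_mul_smul_comm, h.BA, smul_neg, Finset.sum_neg_distrib]
    rw [Finset.sum_comm]
    simp [mul_comm]

lemma gauss (h : Maj A B) (s : ι → ℝ) (hs : ∀ l, |s l| ≤ 1) (S : Finset ι) :
    ∃ ρ : Matrix m m ℂ, ρ.PosSemidef ∧ trace ρ = Fintype.card m ∧
      (∀ l ∈ S, ρ * B l - B l * ρ = (Complex.I * (s l : ℂ)) • (A l * ρ + ρ * A l)) ∧
      (∀ l, l ∉ S → ρ * A l = A l * ρ ∧ ρ * B l = B l * ρ) := by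
  induction S using Finset.induction_on with
  | empty => exact ⟨1, PosSemidef.one, by simp, by simp, by simp⟩
  | insert l S hl ih =>
    obtain ⟨ρ, hρ, htr, hin, hout⟩ := ih
    obtain ⟨hcA, hcB⟩ := hout l hl
    set Z := K A B l l with hZ
    have hZρ : Z * ρ = ρ * Z := by
      rw [hZ, K, smul_mul_assoc, mul_smul_comm, mul_assoc, ← hcB, ← mul_assoc, ← hcA, mul_assoc]
    have hZZ : Z * Z = 1 := h.K_sq l l
    have hZh : Zᴴ = Z := h.K_herm l l
    set P : Matrix m m ℂ := 1 + (s l : ℂ) • Z with hP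
    refine ⟨P * ρ, ?_, ?_, ?_, ?_⟩
    · set θ := Real.arcsin (s l) / 2 with hθ
      set Q : Matrix m m ℂ := ((Real.cos θ : ℝ) : ℂ) • 1 + ((Real.sin θ : ℝ) : ℂ) • Z with hQ
      have hs2 : s l = 2 * Real.sin θ * Real.cos θ := by
        rw [← Real.sin_two_mul, hθ, mul_div_cancel₀ _ two_ne_zero,
          Real.sin_arcsin (abs_le.mp (hs l)).1 (abs_le.mp (hs l)).2]
      have hQh : Qᴴ = Q := by
        simp [hQ, conjTranspose_smul, hZh, -Complex.ofReal_cos, -Complex.ofReal_sin]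
      have hQρ : Q * ρ = ρ * Q := by simp [hQ, add_mul, mul_add, hZρ]
      have hQQ : Q * Q = P := by
        rw [hQ, hP, hs2]
        simp only [add_mul, mul_add, smul_mul_smul_comm, hZZ, mul_one, one_mul]
        have e : ((Real.cos θ : ℝ) : ℂ) * ((Real.cos θ : ℝ) : ℂ) +
          ((Real.sin θ : ℝ) : ℂ) * ((Real.sin θ : ℝ) : ℂ) = 1 := by
          have := Real.cos_sq_add_sin_sq θ
          rw [sq, sq] at this
          exact_mod_cast this
        have e1 : (1 : Matrix m m ℂ) = (((Real.cos θ : ℝ) : ℂ) * ((Real.cos θ : ℝ) : ℂ) +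
          ((Real.sin θ : ℝ) : ℂ) * ((Real.sin θ : ℝ) : ℂ)) • 1 := by rw [e, one_smul]
        conv_rhs => rw [e1]
        push_cast
        module
      have : P * ρ = Q * ρ * Qᴴ := by
        rw [hQh, mul_assoc, ← hQρ, ← mul_assoc, hQQ]
      rw [this]
      exact hρ.mul_mul_conjTranspose_same Q
    · have e : trace (Z * ρ) = 0 := by
        have e1 : trace (A l * B l * ρ) = - trace (A l * B l * ρ) := by
          calc trace (A l * B l * ρ) = trace (B l * ρ * A l) := by rw [mul_assoc, trace_mul_comm]
            _ = trace (B l * A l * ρ) := by rw [mul_assoc, hcA, mul_assoc]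
            _ = _ := by rw [h.BA, neg_mul, trace_neg]
        have e2 : trace (A l * B l * ρ) = 0 := by
          linear_combination e1 / 2
        rw [hZ, K, smul_mul_assoc, trace_smul, e2, smul_zero]
      rw [hP, add_mul, trace_add, one_mul, smul_mul_assoc, trace_smul, e, smul_zero, add_zero, htr]
    · intro k hk
      rcases eq_or_ne k l with rfl | hkl
      · have r1 : P * ρ * B k = ρ * B k + (s k * Complex.I) • (ρ * A k) := by
          rw [hP, add_mul, add_mul, one_mul, smul_mul_assoc, smul_mul_assoc, hZρ, mul_assoc,
            h.Z_B, mul_smul_comm, smul_smul]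
        have r2 : B k * (P * ρ) = ρ * B k - (s k * Complex.I) • (ρ * A k) := by
          rw [hP, add_mul, mul_add, one_mul, smul_mul_assoc, mul_smul_comm, ← mul_assoc, h.B_Z,
            hcB, neg_mul, smul_mul_assoc, hcA, smul_neg, smul_smul, ← sub_eq_add_neg]
        have r3 : A k * (P * ρ) = ρ * A k + (s k : ℂ) • (A k * Z * ρ) := by
          rw [hP, add_mul, mul_add, one_mul, smul_mul_assoc, mul_smul_comm, ← mul_assoc, hcA]
        have r4 : P * ρ * A k = ρ * A k - (s k : ℂ) • (A k * Z * ρ) := by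
          rw [hP, add_mul, add_mul, one_mul, smul_mul_assoc, smul_mul_assoc, mul_assoc, hcA,
            ← mul_assoc, h.Z_A, neg_mul, smul_neg, ← sub_eq_add_neg]
        rw [r1, r2, r3, r4]
        module
      · have hkS : k ∈ S := (Finset.mem_insert.mp hk).resolve_left hkl
        have pA : P * A k = A k * P := by
          simp [hP, add_mul, mul_add, hZ, h.Z_A_ne hkl]
        have pB : P * B k = B k * P := by
          simp [hP, add_mul, mul_add, hZ, h.Z_B_ne hkl]
        calc P * ρ * B k - B k * (P * ρ) = P * (ρ * B k - B k * ρ) := by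
              rw [← mul_assoc, ← pB]; noncomm_ring
          _ = _ := by
              rw [hin k hkS, mul_smul_comm, mul_add, ← mul_assoc, pA, mul_assoc, mul_assoc]
    · intro k hk
      rw [Finset.mem_insert, not_or] at hk
      obtain ⟨oA, oB⟩ := hout k hk.2
      have pA : P * A k = A k * P := by
        simp [hP, add_mul, mul_add, hZ, h.Z_A_ne hk.1]
      have pB : P * B k = B k * P := by
        simp [hP, add_mul, mul_add, hZ, h.Z_B_ne hk.1]
      constructor
      · rw [mul_assoc, oA, ← mul_assoc, pA, mul_assoc]
      · rw [mul_assoc, oB, ← mul_assoc, pB, mul_assoc]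

lemma wick_state (h : Maj A B) (X : Matrix ι ι ℝ) (hX : X.IsHermitian)
    (hc : ∀ u : ι → ℝ, u ⬝ᵥ u = 1 → |u ⬝ᵥ (X *ᵥ u)| ≤ 1) :
    ∃ ρ : Matrix m m ℂ, ρ.PosSemidef ∧ trace ρ = Fintype.card m ∧
      ∀ k, ρ * B k - B k * ρ = Complex.I • ∑ j, ((X k j : ℝ) : ℂ) • (A j * ρ + ρ * A j) := by
  set U : Matrix ι ι ℝ := (hX.eigenvectorUnitary : Matrix ι ι ℝ) with hU
  have hU1 : Uᵀ * U = 1 := by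
    have := Unitary.coe_star_mul_self hX.eigenvectorUnitary
    simpa [star_eq_conjTranspose, conjTranspose_eq_transpose_of_trivial] using this
  have hU2 : U * Uᵀ = 1 := by
    have := Unitary.coe_mul_star_self hX.eigenvectorUnitary
    simpa [star_eq_conjTranspose, conjTranspose_eq_transpose_of_trivial] using this
  have hspec : X = U * diagonal hX.eigenvalues * Uᵀ := by
    have := hX.spectral_theorem
    rw [Unitary.conjStarAlgAut_apply] at this
    simpa [star_eq_conjTranspose, conjTranspose_eq_transpose_of_trivial, Function.comp_def] using this
  have hs : ∀ l, |hX.eigenvalues l| ≤ 1 := by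
    intro l
    have h1 := hX.eigenvalues_eq l
    have hn : (⇑(hX.eigenvectorBasis l) : ι → ℝ) ⬝ᵥ ⇑(hX.eigenvectorBasis l) = 1 := by
      have h2 : inner ℝ (hX.eigenvectorBasis l) (hX.eigenvectorBasis l) = (1:ℝ) := by
        rw [real_inner_self_eq_norm_sq, hX.eigenvectorBasis.orthonormal.1 l]; simp
      rw [EuclideanSpace.inner_eq_star_dotProduct] at h2
      simpa using h2
    have h3 := hc _ hn
    rw [h1]
    simpa using h3
  obtain ⟨ρ, hρ, htr, hin, -⟩ := gauss (h.rot U hU1) hX.eigenvalues hs Finset.univ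
  refine ⟨ρ, hρ, htr, fun k => ?_⟩
  have hBk : B k = ∑ l, ((U k l : ℝ) : ℂ) • ∑ x, ((U x l : ℝ) : ℂ) • B x := by
    simp only [Finset.smul_sum, smul_smul]
    rw [Finset.sum_comm]
    simp only [← Finset.sum_smul]
    have : ∀ x, ∑ l, ((U k l : ℝ) : ℂ) * ((U x l : ℝ) : ℂ) = if k = x then 1 else 0 := by
      intro x
      have e := congrFun (congrFun hU2 k) x
      simp only [mul_apply, transpose_apply, one_apply] at e
      have := congrArg (fun r : ℝ => (r : ℂ)) e
      push_cast at this
      rw [this]; split_ifs <;> simp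
    simp [this]
  have hXk : ∀ j, ((X k j : ℝ) : ℂ) =
      ∑ l, ((U k l : ℝ) : ℂ) * (hX.eigenvalues l : ℂ) * ((U j l : ℝ) : ℂ) := by
    intro j
    have e := congrFun (congrFun hspec k) j
    rw [mul_apply] at e
    simp only [mul_diagonal, transpose_apply] at e
    have := congrArg (fun r : ℝ => (r : ℂ)) e
    push_cast at this
    exact this
  have h1 : ρ * B k - B k * ρ = ∑ l, ((U k l : ℝ) : ℂ) •
      (ρ * (∑ x, ((U x l : ℝ) : ℂ) • B x) - (∑ x, ((U x l : ℝ) : ℂ) • B x) * ρ) := by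
    conv_lhs => rw [hBk]
    rw [Finset.mul_sum, Finset.sum_mul, ← Finset.sum_sub_distrib]
    simp only [mul_smul_comm, smul_mul_assoc, smul_sub]
  rw [h1]
  have h2 := fun l => hin l (Finset.mem_univ l)
  simp only [h2]
  simp only [hXk, Finset.sum_smul]
  rw [Finset.sum_comm, Finset.smul_sum]
  refine Finset.sum_congr rfl fun l _ => ?_
  simp only [Finset.sum_mul, Finset.mul_sum, ← Finset.sum_add_distrib, Finset.smul_sum]
  refine Finset.sum_congr rfl fun x _ => ?_
  simp only [mul_smul_comm, smul_mul_assoc, ← smul_add, smul_smul]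
  congr 1; ring

lemma wick_pair {X : Matrix ι ι ℝ} {ρ : Matrix m m ℂ} {k : ι}
    (hr : ρ * B k - B k * ρ = Complex.I • ∑ j, ((X k j : ℝ) : ℂ) • (A j * ρ + ρ * A j))
    (M : Matrix m m ℂ) :
    trace (ρ * (B k * M - M * B k)) =
      Complex.I * ∑ l, ((X k l : ℝ) : ℂ) * trace (ρ * (M * A l + A l * M)) := by
  have h1 : trace (ρ * (B k * M - M * B k)) = trace ((ρ * B k - B k * ρ) * M) := by
    rw [mul_sub, sub_mul, trace_sub, trace_sub, mul_assoc, mul_assoc, trace_mul_comm (B k),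
      mul_assoc]
  rw [h1, hr, smul_mul_assoc, trace_smul, Finset.sum_mul, trace_sum, smul_eq_mul]
  congr 1
  refine Finset.sum_congr rfl fun l _ => ?_
  rw [smul_mul_assoc, trace_smul, smul_eq_mul, mul_add, trace_add, add_mul, trace_add,
    mul_assoc, mul_assoc, trace_mul_comm (A l), mul_assoc]

lemma two_pt (h : Maj A B) {X : Matrix ι ι ℝ} (hX : X.IsHermitian) {ρ : Matrix m m ℂ}
    (htr : trace ρ = Fintype.card m)
    (hr : ∀ k, ρ * B k - B k * ρ = Complex.I • ∑ j, ((X k j : ℝ) : ℂ) • (A j * ρ + ρ * A j))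
    (j k : ι) : trace (ρ * (A j * B k)) = -Complex.I * (Fintype.card m * X j k) := by
  have h1 := wick_pair (hr k) (A j)
  have hs : X k j = X j k := by simpa using hX.apply j k
  rw [h.BA] at h1
  simp only [h.AA, mul_smul_comm, mul_one, trace_smul, htr, smul_eq_mul, ite_mul, zero_mul,
    mul_ite, mul_zero, Finset.sum_ite_eq, Finset.mem_univ, if_true, hs] at h1
  rw [mul_sub, mul_neg, trace_sub, trace_neg] at h1
  linear_combination (-1/2) * h1

lemma two_pt_K (h : Maj A B) {X : Matrix ι ι ℝ} (hX : X.IsHermitian) {ρ : Matrix m m ℂ}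
    (htr : trace ρ = Fintype.card m)
    (hr : ∀ k, ρ * B k - B k * ρ = Complex.I • ∑ j, ((X k j : ℝ) : ℂ) • (A j * ρ + ρ * A j))
    (j k : ι) : trace (ρ * K A B j k) = Fintype.card m * X j k := by
  rw [K, mul_smul_comm, trace_smul, two_pt h hX htr hr, smul_eq_mul, ← mul_assoc, mul_neg,
    Complex.I_mul_I]
  ring

lemma four_pt (h : Maj A B) {X : Matrix ι ι ℝ} (hX : X.IsHermitian) {ρ : Matrix m m ℂ}
    (htr : trace ρ = Fintype.card m)
    (hr : ∀ k, ρ * B k - B k * ρ = Complex.I • ∑ j, ((X k j : ℝ) : ℂ) • (A j * ρ + ρ * A j))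
    {j k : ι} (hjk : j ≠ k) (h0 : X j j = 0) :
    trace (ρ * (K A B j j * K A B k k)) = -(Fintype.card m * (X j k)^2) := by
  have h1 := wick_pair (hr j) (A j * A k * B k)
  have hZ : K A B j j * K A B k k = B j * (A j * A k * B k) := by
    have e : B j * (A j * A k * B k) = -(A j * B j * (A k * B k)) := by
      calc B j * (A j * A k * B k) = (B j * A j) * A k * B k := by noncomm_ring
        _ = _ := by rw [h.BA]; noncomm_ring
    rw [e, K, K, smul_mul_smul_comm, Complex.I_mul_I, neg_one_smul]
  have hM : A j * A k * B k * B j = -(B j * (A j * A k * B k)) := by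
    calc A j * A k * B k * B j = A j * A k * (B k * B j) := by noncomm_ring
      _ = A j * -(A k * B j) * B k := by rw [h.BBne hjk.symm]; noncomm_ring
      _ = -(-(A j * B j) * A k * B k) := by rw [← h.BA]; noncomm_ring
      _ = _ := by rw [← h.BA]; noncomm_ring
  have hl : ∀ l, A j * A k * B k * A l + A l * (A j * A k * B k) =
      (if l = j then (2:ℂ) else 0) • (A k * B k) - (if l = k then (2:ℂ) else 0) • (A j * B k) := by
    intro l
    have e : A j * A k * B k * A l + A l * (A j * A k * B k) =
      (A l * A j + A j * A l) * (A k * B k) - A j * (A l * A k + A k * A l) * B k := by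
      calc _ = A j * A k * (B k * A l) + A l * (A j * A k * B k) := by noncomm_ring
        _ = _ := by rw [h.BA]; noncomm_ring
    rw [e, h.AA, h.AA]
    simp only [smul_mul_assoc, mul_smul_comm, one_mul, mul_one]
  simp only [hl] at h1
  simp only [hM, mul_sub, mul_smul_comm, trace_sub, trace_smul, smul_eq_mul, ite_mul, zero_mul,
    mul_ite, mul_zero, Finset.sum_sub_distrib, Finset.sum_ite_eq', Finset.mem_univ, if_true,
    two_pt h hX htr hr, h0] at h1
  rw [hZ]
  rw [mul_neg, trace_neg] at h1
  push_cast at h1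
  linear_combination (1/2) * h1 + (Fintype.card m * (X j k : ℂ)^2) * Complex.I_mul_I

lemma abs_trace_le {ρ Q : Matrix m m ℂ} (hρ : ρ.PosSemidef) (ht : trace ρ = 1)
    (hQ : Qᴴ = Q) (hQ2 : Q * Q = 1) : |(trace (ρ * Q)).re| ≤ 1 := by
  have e1 : (1 + Q)ᴴ * (1 + Q) = (2:ℂ) • (1 + Q) := by
    rw [conjTranspose_add, hQ, conjTranspose_one, mul_add, add_mul, add_mul, hQ2]
    simp only [one_mul, mul_one]; module
  have e2 : (1 - Q)ᴴ * (1 - Q) = (2:ℂ) • (1 - Q) := by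
    rw [conjTranspose_sub, hQ, conjTranspose_one, mul_sub, sub_mul, sub_mul, hQ2]
    simp only [one_mul, mul_one]; module
  have p1 := trace_mul_nonneg hρ (posSemidef_conjTranspose_mul_self (1 + Q))
  have p2 := trace_mul_nonneg hρ (posSemidef_conjTranspose_mul_self (1 - Q))
  rw [e1, mul_smul_comm, mul_add, trace_smul, trace_add, mul_one, ht] at p1
  rw [e2, mul_smul_comm, mul_sub, trace_smul, trace_sub, mul_one, ht] at p2
  simp at p1 p2
  rw [abs_le]; constructor <;> linarith

/-- Off-diagonal symmetrized half covariance matrix. -/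
def Xof (A B : ι → Matrix m m ℂ) (ρ : Matrix m m ℂ) : Matrix ι ι ℝ := fun j k =>
  if j = k then 0 else ((trace (ρ * K A B j k)).re + (trace (ρ * K A B k j)).re) / 4

lemma Xof_herm (ρ : Matrix m m ℂ) : (Xof A B ρ).IsHermitian := by
  ext j k
  simp only [conjTranspose_apply, Xof, star_trivial, eq_comm (a := k), add_comm]

lemma Xof_contr (h : Maj A B) {ρ : Matrix m m ℂ} (hρ : ρ.PosSemidef) (ht : trace ρ = 1)
    (u : ι → ℝ) (hu : u ⬝ᵥ u = 1) : |u ⬝ᵥ (Xof A B ρ *ᵥ u)| ≤ 1 := by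
  set G : ι → ι → ℝ := fun j k => (trace (ρ * K A B j k)).re with hG
  set g := ∑ j, ∑ k, u j * u k * G j k with hg
  set d := ∑ j, u j * u j * G j j with hd
  have hu' : ∑ j, u j * u j = 1 := hu
  have e1 : u ⬝ᵥ (Xof A B ρ *ᵥ u) = (g - d) / 2 := by
    have e : ∀ j k, u j * (Xof A B ρ j k * u k) = u j * u k * G j k / 4 + u k * u j * G k j / 4 -
        (if j = k then u j * u k * G j k / 2 else 0) := by
      intro j k
      simp only [Xof, hG]
      split_ifs with hjk
      · subst hjk; ring
      · ring
    simp only [dotProduct, mulVec, Finset.mul_sum, e, Finset.sum_sub_distrib,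
      Finset.sum_add_distrib, Finset.sum_ite_eq, Finset.mem_univ, if_true]
    rw [Finset.sum_comm (f := fun x y => u y * u x * G y x / 4)]
    simp only [hg, hd, ← Finset.sum_div]
    ring
  have h1 : |g| ≤ 1 := by
    let U : Matrix ι Unit ℝ := Matrix.of fun k _ => u k
    have hU : Uᵀ * U = 1 := by
      ext a b
      rw [mul_apply]
      simpa [U, transpose_apply, one_apply] using hu'
    have hr := h.rot U hU
    have := abs_trace_le hρ ht (hr.K_herm () ()) (hr.K_sq () ())
    have e : (trace (ρ * K (fun l => ∑ k, ((U k l : ℝ) : ℂ) • A k)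
        (fun l => ∑ k, ((U k l : ℝ) : ℂ) • B k) () ())).re = g := by
      simp only [K, Finset.sum_mul_sum, smul_mul_smul_comm]
      simp only [K, U, of_apply, hg, hG, mul_smul_comm,
        trace_smul, Finset.mul_sum, trace_sum, smul_eq_mul, Finset.smul_sum, Complex.re_sum]
      refine Finset.sum_congr rfl fun x _ => Finset.sum_congr rfl fun y _ => ?_
      rw [← Complex.re_ofReal_mul]
      congr 1
      push_cast; ring
    rwa [e] at this
  have h2 : |d| ≤ 1 := by
    calc |d| ≤ ∑ j, |u j * u j * G j j| := Finset.abs_sum_le_sum_abs _ _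
      _ ≤ ∑ j, u j * u j := by
        refine Finset.sum_le_sum fun j _ => ?_
        rw [abs_mul, abs_mul_self]
        exact mul_le_of_le_one_right (mul_self_nonneg _)
          (abs_trace_le hρ ht (h.K_herm j j) (h.K_sq j j))
      _ = 1 := hu'
  rw [e1, abs_le]
  rw [abs_le] at h1 h2
  constructor <;> linarith [h1.1, h1.2, h2.1, h2.2]

lemma dephase (z : ι → Matrix m m ℂ) (hz : ∀ j, (z j)ᴴ = z j) (hz2 : ∀ j, z j * z j = 1)
    (hzz : ∀ j k, z j * z k = z k * z j) (H ρ₀ : Matrix m m ℂ) (hρ₀ : ρ₀.PosSemidef)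
    (hH : ∀ j, z j * H = H * z j) (S : Finset ι) :
    ∃ ρ : Matrix m m ℂ, ρ.PosSemidef ∧ trace ρ = trace ρ₀ ∧ trace (ρ * H) = trace (ρ₀ * H) ∧
      ∀ j ∈ S, ρ * z j = z j * ρ := by
  induction S using Finset.induction_on with
  | empty => exact ⟨ρ₀, hρ₀, rfl, rfl, by simp⟩
  | insert l S hl ih =>
    obtain ⟨ρ, hρ, ht, hH', hS⟩ := ih
    refine ⟨((1/2 : ℝ) : ℂ) • (ρ + z l * ρ * (z l)ᴴ), ?_, ?_, ?_, ?_⟩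
    · exact (hρ.add (hρ.mul_mul_conjTranspose_same _)).smul
        (by rw [Complex.zero_le_real]; norm_num)
    · rw [hz, trace_smul, trace_add, mul_assoc, trace_mul_comm (z l), mul_assoc, hz2, mul_one, ht,
        smul_eq_mul]
      push_cast; ring
    · rw [hz, smul_mul_assoc, trace_smul, add_mul, trace_add]
      have : trace (z l * ρ * z l * H) = trace (ρ * H) := by
        rw [mul_assoc, hH, mul_assoc, trace_mul_comm (z l), mul_assoc, mul_assoc, hz2, mul_one]
      rw [this, hH', smul_eq_mul]
      push_cast; ring
    · intro j hj
      rw [hz, smul_mul_assoc, mul_smul_comm]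
      congr 1
      rcases Finset.mem_insert.mp hj with rfl | hj
      · rw [add_mul, mul_add, mul_assoc (z j * ρ), hz2, mul_one, ← mul_assoc, ← mul_assoc, hz2,
          one_mul, add_comm]
      · rw [add_mul, mul_add, hS j hj, mul_assoc (z l * ρ), hzz l j, mul_assoc (z l), ← mul_assoc ρ,
          hS j hj, ← mul_assoc, ← mul_assoc, ← mul_assoc, ← mul_assoc, hzz l j]

lemma Maj.ZZ (h : Maj A B) (j k : ι) : K A B j j * K A B k k = K A B k k * K A B j j := by
  rcases eq_or_ne j k with rfl | hjk
  · rfl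
  · conv_lhs => rw [K.eq_def A B k k]
    conv_rhs => rw [K.eq_def A B k k]
    rw [mul_smul_comm, smul_mul_assoc, ← mul_assoc, h.Z_A_ne hjk.symm, mul_assoc,
      h.Z_B_ne hjk.symm, mul_assoc]

lemma Maj.Z_B' (h : Maj A B) (l : ι) : K A B l l * B l = -(B l * K A B l l) := by
  rw [h.Z_B, h.B_Z, neg_neg]

lemma Maj.Z_hop (h : Maj A B) {j k : ι} (hjk : j ≠ k) :
    K A B j j * K A B j k = -(K A B j k * K A B j j) ∧
    K A B j j * K A B k j = -(K A B k j * K A B j j) := by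
  constructor
  · conv_lhs => rw [K.eq_def A B j k]
    conv_rhs => rw [K.eq_def A B j k]
    rw [mul_smul_comm, smul_mul_assoc, ← mul_assoc, h.Z_A, neg_mul, mul_assoc,
      h.Z_B_ne hjk.symm, mul_assoc, smul_neg]
  · conv_lhs => rw [K.eq_def A B k j]
    conv_rhs => rw [K.eq_def A B k j]
    rw [mul_smul_comm, smul_mul_assoc, ← mul_assoc, h.Z_A_ne hjk.symm, mul_assoc,
      h.Z_B', mul_neg, mul_assoc, smul_neg]

lemma trace_anti {ρ z T : Matrix m m ℂ} (hz : z * z = 1) (hρ : ρ * z = z * ρ)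
    (hT : z * T = -(T * z)) : trace (ρ * T) = 0 := by
  have : trace (ρ * T) = - trace (ρ * T) := by
    calc trace (ρ * T) = trace (ρ * (z * z) * T) := by rw [hz, mul_one]
      _ = trace (z * (ρ * (z * T))) := by rw [← mul_assoc ρ, hρ]; simp only [mul_assoc]
      _ = - trace (z * (ρ * T) * z) := by rw [hT]; simp only [mul_neg, trace_neg, mul_assoc]
      _ = - trace (ρ * T) := by rw [trace_mul_comm, ← mul_assoc, hz, one_mul]
  linear_combination this / 2

theorem abstract_bounds [Nonempty m] (h : Maj A B) (E E' : Finset (ι × ι))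
    (hE : ∀ e ∈ E, e.1 ≠ e.2) (hE' : ∀ e ∈ E', e.1 ≠ e.2)
    (w : ι × ι → ℝ) (hw : ∀ e ∈ E, 0 ≤ w e) (w' : ι × ι → ℝ) (μ : ι → ℝ)
    (Hc Hq : Matrix m m ℂ)
    (hc : Hc = ∑ e ∈ E, ((w e * (-1/4) : ℝ) : ℂ) • (K A B e.1 e.1 + K A B e.2 e.2 +
      K A B e.1 e.1 * K A B e.2 e.2) + ∑ j, ((μ j / 2 : ℝ) : ℂ) • K A B j j)
    (hq : Hq = ∑ e ∈ E', ((w' e * (-1/2) : ℝ) : ℂ) • (K A B e.1 e.2 + K A B e.2 e.1)) :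
    (lamMax Hc + lamMax Hq) / 3 ≤ lamMax (Hc + Hq) ∧
    lamMax (Hc + Hq) ≤ lamMax Hc + lamMax Hq := by
  have hch : Hc.IsHermitian := by
    rw [hc, IsHermitian]
    simp only [conjTranspose_add, conjTranspose_sum, conjTranspose_smul, conjTranspose_mul,
      h.K_herm, Complex.star_def, Complex.conj_ofReal]
    congr 1
    refine Finset.sum_congr rfl fun e _ => ?_
    rw [h.ZZ e.2]
  have hqh : Hq.IsHermitian := by
    rw [hq, IsHermitian]
    simp only [conjTranspose_add, conjTranspose_sum, conjTranspose_smul,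
      h.K_herm, Complex.star_def, Complex.conj_ofReal]
  have hH := hch.add hqh
  refine ⟨?_, ?_⟩
  · -- classical part
    have h1 : lamMax Hc ≤ lamMax (Hc + Hq) := by
      obtain ⟨ρ₀, hρ₀, ht₀, hl₀⟩ := exists_top hch
      obtain ⟨ρ, hρ, ht, hl, hcomm⟩ := dephase (fun j => K A B j j) (fun j => h.K_herm j j)
        (fun j => h.K_sq j j) h.ZZ Hc ρ₀ hρ₀ (by
          intro j
          have hz : ∀ k, K A B j j * K A B k k = K A B k k * K A B j j := h.ZZ j
          rw [hc]
          simp only [mul_add, add_mul, Finset.mul_sum, Finset.sum_mul, mul_smul_comm,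
            smul_mul_assoc, hz]
          congr 1
          refine Finset.sum_congr rfl fun e _ => ?_
          rw [← mul_assoc, hz, mul_assoc, hz, mul_assoc]) Finset.univ
      have hq0 : trace (ρ * Hq) = 0 := by
        rw [hq, Finset.mul_sum, trace_sum]
        refine Finset.sum_eq_zero fun e he => ?_
        obtain ⟨a1, a2⟩ := h.Z_hop (hE' e he)
        rw [mul_smul_comm, trace_smul, mul_add, trace_add,
          trace_anti (h.K_sq e.1 e.1) (hcomm _ (Finset.mem_univ e.1)) a1,
          trace_anti (h.K_sq e.1 e.1) (hcomm _ (Finset.mem_univ e.1)) a2]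
        simp
      have := trace_le hH hρ
      rw [mul_add, trace_add, hq0, hl, hl₀, ht, ht₀] at this
      simpa using this
    have h2 : lamMax Hq / 2 ≤ lamMax (Hc + Hq) := by
      obtain ⟨ρ₀, hρ₀, ht₀, hl₀⟩ := exists_top hqh
      have hX := Xof_herm (A := A) (B := B) ρ₀
      obtain ⟨ρ, hρ, ht, hr⟩ := wick_state h (Xof A B ρ₀) hX (Xof_contr h hρ₀ ht₀)
      have hX0 : ∀ j, Xof A B ρ₀ j j = 0 := fun j => by simp [Xof]
      have hN : (0:ℝ) < Fintype.card m := by exact_mod_cast Fintype.card_pos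
      have hK := fun j k => two_pt_K h hX ht hr j k
      have eq1 : (trace (ρ * Hq)).re = Fintype.card m * (lamMax Hq / 2) := by
        have e0 : lamMax Hq = (trace (ρ₀ * Hq)).re := by rw [hl₀]; simp
        rw [e0]
        rw [hq]
        simp only [Finset.mul_sum, mul_smul_comm, trace_sum, trace_smul, mul_add, trace_add, hK,
          Complex.re_sum, Finset.sum_div, smul_eq_mul, Complex.re_ofReal_mul, Complex.add_re]
        refine Finset.sum_congr rfl fun e he => ?_
        have hne := hE' e he
        simp only [Xof, hne, hne.symm, if_false, ← Complex.ofReal_natCast, Complex.re_ofReal_mul,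
          Complex.ofReal_re, Complex.add_re]
        ring
      have eq2 : 0 ≤ (trace (ρ * Hc)).re := by
        rw [hc]
        simp only [Finset.mul_sum, mul_smul_comm, trace_sum, trace_smul, mul_add, trace_add, hK,
          Complex.re_sum, smul_eq_mul, hX0, Complex.add_re, Complex.ofReal_zero, mul_zero,
          Complex.zero_re, Finset.sum_const_zero, add_zero, zero_add, Complex.re_ofReal_mul]
        refine Finset.sum_nonneg fun e he => ?_
        rw [four_pt h hX ht hr (hE e he) (hX0 _)]
        have : (-((Fintype.card m : ℂ) * ((Xof A B ρ₀ e.1 e.2 : ℝ) : ℂ)^2)).re =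
          -((Fintype.card m : ℝ) * (Xof A B ρ₀ e.1 e.2)^2) := by
          rw [← Complex.ofReal_re (-((Fintype.card m : ℝ) * (Xof A B ρ₀ e.1 e.2)^2))]
          congr 1; push_cast; rfl
        rw [this]
        have p := mul_nonneg (hw e he) (mul_nonneg hN.le (sq_nonneg (Xof A B ρ₀ e.1 e.2)))
        linarith
      have := trace_le hH hρ
      rw [mul_add, trace_add, Complex.add_re, eq1, ht, Complex.natCast_re] at this
      have h3 : Fintype.card m * (lamMax Hq / 2) ≤ Fintype.card m * lamMax (Hc + Hq) := by linarith
      exact le_of_mul_le_mul_left h3 hN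
    linarith
  · obtain ⟨ρ, hρ, ht, hl⟩ := exists_top hH
    have e1 := trace_le hch hρ
    have e2 := trace_le hqh hρ
    rw [mul_add, trace_add] at hl
    have e3 := congrArg Complex.re hl
    rw [ht] at e1 e2
    simp only [Complex.add_re, Complex.ofReal_re, Complex.one_re, mul_one] at e1 e2 e3
    linarith

end cliff

lemma maj_of {n : ℕ} {c : Fin (2*n) → Matrix (Fin (2^n)) (Fin (2^n)) ℂ} (hc : IsMajorana n c) :
    Maj (majA n c) (majB n c) := by
  refine ⟨fun j => hc.1 _, fun j => hc.1 _, fun j k => ?_, fun j k => ?_, fun j k => ?_⟩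
  · rw [majA, majA, hc.2]
    simp only [Fin.mk.injEq, mul_eq_mul_left_iff, Fin.ext_iff]
    split_ifs <;> simp_all
  · rw [majB, majB, hc.2]
    simp only [Fin.mk.injEq, Fin.ext_iff]
    split_ifs <;> first | rfl | omega | simp
  · rw [majA, majB]
    have := hc.2 ⟨2*j+1, by have := j.isLt; omega⟩ ⟨2*k, by have := k.isLt; omega⟩
    rw [if_neg (by simp only [Fin.mk.injEq]; omega)] at this
    exact eq_neg_of_add_eq_zero_left this

section conv
variable {n : ℕ} {c : Fin (2*n) → Matrix (Fin (2^n)) (Fin (2^n)) ℂ}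

lemma annH (h : Maj (majA n c) (majB n c)) (j : Fin n) :
    (ann n c j)ᴴ = ((1:ℂ)/2) • (majA n c j - Complex.I • majB n c j) := by
  simp [ann, conjTranspose_smul, h.hA, h.hB, sub_eq_add_neg]

lemma annH_ann (h : Maj (majA n c) (majB n c)) (j k : Fin n) :
    (ann n c j)ᴴ * ann n c k = ((1:ℂ)/4) • (majA n c j * majA n c k + majB n c j * majB n c k
      + K (majA n c) (majB n c) j k + K (majA n c) (majB n c) k j) := by
  rw [annH h, ann, smul_mul_smul_comm]
  have hI := Complex.I_mul_I
  simp only [sub_mul, mul_add, smul_mul_assoc, mul_smul_comm, h.BA, K]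
  rw [smul_sub, smul_smul Complex.I Complex.I, hI]
  rw [show (1:ℂ)/2 * (1/2) = 1/4 by norm_num]
  congr 1
  module

lemma num_eq (h : Maj (majA n c) (majB n c)) (j : Fin n) :
    num n c j = ((1:ℂ)/2) • (1 + K (majA n c) (majB n c) j j) := by
  rw [num, annH_ann h, h.A2, h.B2]
  module

lemma hop_eq (h : Maj (majA n c) (majB n c)) {j k : Fin n} (hjk : j ≠ k) :
    -((ann n c j)ᴴ * ann n c k) - (ann n c k)ᴴ * ann n c j =
      (-(1:ℂ)/2) • (K (majA n c) (majB n c) j k + K (majA n c) (majB n c) k j) := by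
  rw [annH_ann h, annH_ann h, h.AAne hjk, h.BBne hjk]
  module

end conv

end CIFH

/-- For `H = H_class + H_quad` a traceless classically interacting fermionic
Hamiltonian, `(λ_max(H_class) + λ_max(H_quad))/3 ≤ λ_max(H) ≤ λ_max(H_class) + λ_max(H_quad)`. -/
theorem traceless_CIFH_lamMax_bounds
    (n : ℕ) (hn : 1 ≤ n)
    (c : Fin (2*n) → Matrix (Fin (2^n)) (Fin (2^n)) ℂ) (hc : IsMajorana n c)
    (E E' : Finset (Fin n × Fin n))
    (hE : ∀ e ∈ E, e.1 < e.2) (hE' : ∀ e ∈ E', e.1 < e.2)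
    (w : Fin n × Fin n → ℝ) (hw : ∀ e ∈ E, 0 ≤ w e)
    (w' : Fin n × Fin n → ℝ) (μ : Fin n → ℝ)
    (Hclass Hquad : Matrix (Fin (2^n)) (Fin (2^n)) ℂ)
    (hclass : Hclass = ∑ e ∈ E, (w e : ℂ) • (((1:ℂ)/4) • 1 - num n c e.1 * num n c e.2)
        + ∑ j, (μ j : ℂ) • (num n c j - ((1:ℂ)/2) • 1))
    (hquad : Hquad = ∑ e ∈ E', (w' e : ℂ) •
        (-((ann n c e.1)ᴴ * ann n c e.2) - (ann n c e.2)ᴴ * ann n c e.1)) :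
    (lamMax Hclass + lamMax Hquad) / 3 ≤ lamMax (Hclass + Hquad) ∧
    lamMax (Hclass + Hquad) ≤ lamMax Hclass + lamMax Hquad := by
  have h := CIFH.maj_of hc
  refine CIFH.abstract_bounds h E E' (fun e he => (hE e he).ne) (fun e he => (hE' e he).ne)
    w hw w' μ Hclass Hquad ?_ ?_
  · rw [hclass]
    congr 1
    · refine Finset.sum_congr rfl fun e _ => ?_
      rw [CIFH.num_eq h, CIFH.num_eq h, smul_mul_smul_comm, add_mul, mul_add, mul_add]
      simp only [one_mul, mul_one]
      push_cast
      module
    · refine Finset.sum_congr rfl fun j _ => ?_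
      rw [CIFH.num_eq h]
      push_cast
      module
  · rw [hquad]
    refine Finset.sum_congr rfl fun e he => ?_
    rw [CIFH.hop_eq h (hE' e he).ne]
    push_cast
    module

end
end

section
/- Let n ≥ 1 and let c_1, …, c_{2n} ∈ ℂ^{2^n × 2^n} be Majorana operators. Let H = Σ_{(j,k)∈E} w_{jk}(1/4 − n_j n_k) + Σ_{(j,k)∈E'} w'_{jk}(−a_j† a_k − a_k† a_j) with w_{jk} ≥ 0 and w'_{jk} ∈ ℝ, and suppose the weighted graph G_class = (V, E) is bipartite. Let N̂ = Σ_{j∈V} n_j, let q ∈ {0,1,…,⌊n/2⌋}, and let λ_{max,⟨q⟩}(H) denote the maximum of tr(ρ' H) over all positive semi-definite ρ' ∈ ℂ^{2^n × 2^n} with tr(ρ') = 1 and tr(ρ' N̂) = q. Then there exists a fermionic Gaussian state ρ with tr(ρ N̂) = q and tr(ρ H) ≥ λ_{max,⟨q⟩}(H) / (2·((n − 2q)/n + 3/2)). -/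
open Matrix
open scoped ComplexOrder

noncomputable section

/-- Canonical anticommutation relations of two families. -/
structure MajP {n : ℕ} (a b : Fin n → Matrix (Fin (2^n)) (Fin (2^n)) ℂ) : Prop where
  aa : ∀ j k, a j * a k + a k * a j = if j = k then (2 : ℂ) • 1 else 0
  bb : ∀ j k, b j * b k + b k * b j = if j = k then (2 : ℂ) • 1 else 0
  ab : ∀ j k, a j * b k + b k * a j = 0

lemma majP_of_isMajorana {n : ℕ} {c : Fin (2*n) → Matrix (Fin (2^n)) (Fin (2^n)) ℂ}
    (hc : IsMajorana n c) : MajP (majA n c) (majB n c) := by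
  refine ⟨fun j k => ?_, fun j k => ?_, fun j k => ?_⟩
  · have := hc.2 ⟨2*j, by have := j.isLt; omega⟩ ⟨2*k, by have := k.isLt; omega⟩
    simpa [majA, Fin.ext_iff] using this
  · have := hc.2 ⟨2*j+1, by have := j.isLt; omega⟩ ⟨2*k+1, by have := k.isLt; omega⟩
    simpa [majB, Fin.ext_iff] using this
  · have := hc.2 ⟨2*j, by have := j.isLt; omega⟩ ⟨2*k+1, by have := k.isLt; omega⟩
    rw [if_neg (by simp [Fin.ext_iff]; omega)] at this
    simpa [majA, majB] using this

/-- Rotated family. -/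
def rot {n : ℕ} (O : Matrix (Fin n) (Fin n) ℝ) (a : Fin n → Matrix (Fin (2^n)) (Fin (2^n)) ℂ)
    (j : Fin n) : Matrix (Fin (2^n)) (Fin (2^n)) ℂ := ∑ k, ((O j k : ℝ) : ℂ) • a k

lemma rot_anti {n : ℕ} (O : Matrix (Fin n) (Fin n) ℝ)
    (a b : Fin n → Matrix (Fin (2^n)) (Fin (2^n)) ℂ) (j k : Fin n) :
    rot O a j * rot O b k + rot O b k * rot O a j =
      ∑ p, ∑ q, ((O j p : ℂ) * (O k q : ℂ)) • (a p * b q + b q * a p) := by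
  unfold rot
  simp only [Finset.sum_mul_sum, smul_add, Finset.sum_add_distrib, smul_mul_smul_comm]
  congr 1
  rw [Finset.sum_comm]
  refine Finset.sum_congr rfl fun p _ => Finset.sum_congr rfl fun q _ => ?_
  rw [mul_comm (O k q : ℂ)]

lemma rot_diag {n : ℕ} (O : Matrix (Fin n) (Fin n) ℝ) (hO : O * Oᵀ = 1)
    (a : Fin n → Matrix (Fin (2^n)) (Fin (2^n)) ℂ)
    (h : ∀ j k, a j * a k + a k * a j = if j = k then (2 : ℂ) • 1 else 0) (j k : Fin n) :
    rot O a j * rot O a k + rot O a k * rot O a j = if j = k then (2 : ℂ) • 1 else 0 := by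
  rw [rot_anti]
  simp only [h, smul_ite, smul_zero, Finset.sum_ite_eq, Finset.mem_univ, if_true]
  rw [← Finset.sum_smul]
  have h1 : ∑ p, ((O j p : ℂ) * (O k p : ℂ)) = if j = k then 1 else 0 := by
    have := congrFun (congrFun hO j) k
    rw [Matrix.mul_apply, Matrix.one_apply] at this
    simp only [Matrix.transpose_apply] at this
    have h2 := congrArg (fun x : ℝ => (x : ℂ)) this
    push_cast at h2
    rw [h2]
    split_ifs <;> simp
  rw [h1]
  split_ifs <;> simp

lemma MajP.rot {n : ℕ} {a b : Fin n → Matrix (Fin (2^n)) (Fin (2^n)) ℂ} (h : MajP a b)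
    (O : Matrix (Fin n) (Fin n) ℝ) (hO : O * Oᵀ = 1) : MajP (rot O a) (rot O b) := by
  refine ⟨rot_diag O hO a h.aa, rot_diag O hO b h.bb, fun j k => ?_⟩
  rw [rot_anti]
  simp [h.ab]

lemma rot_rot {n : ℕ} (O : Matrix (Fin n) (Fin n) ℝ) (hO : O * Oᵀ = 1)
    (a : Fin n → Matrix (Fin (2^n)) (Fin (2^n)) ℂ) : rot Oᵀ (rot O a) = a := by
  have hO' : Oᵀ * O = 1 := mul_eq_one_comm.mp hO
  funext j
  unfold rot
  simp only [Finset.smul_sum, smul_smul]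
  rw [Finset.sum_comm]
  simp only [← Finset.sum_smul]
  have h1 : ∀ k, ∑ p, ((Oᵀ j p : ℂ) * (O p k : ℂ)) = if j = k then 1 else 0 := by
    intro k
    have := congrFun (congrFun hO' j) k
    rw [Matrix.mul_apply, Matrix.one_apply] at this
    have h2 := congrArg (fun x : ℝ => (x : ℂ)) this
    push_cast at h2
    rw [h2]
    split_ifs <;> simp
  simp only [h1]
  simp

section moments
variable {n : ℕ} {a b : Fin n → Matrix (Fin (2^n)) (Fin (2^n)) ℂ}

/-- The parity operators. -/
def par (a b : Fin n → Matrix (Fin (2^n)) (Fin (2^n)) ℂ) (j : Fin n) :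
    Matrix (Fin (2^n)) (Fin (2^n)) ℂ := Complex.I • (a j * b j)

/-- Product of the Gaussian factors over a list. -/
def gprod (lam : Fin n → ℝ) (a b : Fin n → Matrix (Fin (2^n)) (Fin (2^n)) ℂ) (L : List (Fin n)) :
    Matrix (Fin (2^n)) (Fin (2^n)) ℂ :=
  (L.map fun j => 1 + (lam j : ℂ) • par a b j).prod

lemma two_cancel {m : Type*} {X Y : Matrix m m ℂ} (h : X + X = (2:ℂ) • Y) : X = Y := by
  rw [← two_smul ℂ] at h
  exact smul_right_injective _ (two_ne_zero) h

lemma MajP.asq (h : MajP a b) (j : Fin n) : a j * a j = 1 :=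
  two_cancel (by simpa using h.aa j j)
lemma MajP.bsq (h : MajP a b) (j : Fin n) : b j * b j = 1 :=
  two_cancel (by simpa using h.bb j j)
lemma MajP.aa' (h : MajP a b) {j k : Fin n} (hjk : j ≠ k) : a j * a k = - (a k * a j) :=
  eq_neg_of_add_eq_zero_left (by simpa [hjk] using h.aa j k)
lemma MajP.bb' (h : MajP a b) {j k : Fin n} (hjk : j ≠ k) : b j * b k = - (b k * b j) :=
  eq_neg_of_add_eq_zero_left (by simpa [hjk] using h.bb j k)
lemma MajP.ba' (h : MajP a b) (j k : Fin n) : b j * a k = - (a k * b j) :=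
  eq_neg_of_add_eq_zero_right (h.ab k j)

/-- Sign. -/
def eps (l p : Fin n) : ℂ := if l = p then -1 else 1

lemma MajP.par_a (h : MajP a b) (l p : Fin n) : par a b l * a p = eps l p • (a p * par a b l) := by
  unfold par eps
  split_ifs with e
  · subst e
    simp only [smul_mul_assoc, mul_smul_comm, mul_assoc, h.ba']
    simp
  · have := h.aa' e
    simp only [smul_mul_assoc, mul_smul_comm, mul_assoc, h.ba' l p, one_smul]
    rw [← mul_assoc (a p), ← neg_eq_iff_eq_neg.mpr this]
    simp [mul_assoc]

lemma MajP.par_b (h : MajP a b) (l p : Fin n) : par a b l * b p = eps l p • (b p * par a b l) := by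
  unfold par eps
  split_ifs with e
  · subst e
    simp only [smul_mul_assoc, mul_smul_comm, ← mul_assoc, h.ba']
    simp
  · have := h.bb' e
    simp only [smul_mul_assoc, mul_smul_comm, mul_assoc, this, one_smul]
    rw [← mul_assoc (b p), h.ba']
    simp [mul_assoc]

lemma MajP.par_sq (h : MajP a b) (l : Fin n) : par a b l * par a b l = 1 := by
  unfold par
  rw [smul_mul_smul_comm, mul_assoc, ← mul_assoc (b l), h.ba']
  simp only [Complex.I_mul_I, neg_mul, mul_neg, mul_assoc, h.bsq]
  simp [h.asq]

lemma MajP.par_comm (h : MajP a b) (l p : Fin n) : Commute (par a b l) (par a b p) := by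
  have e : eps l p * eps l p = 1 := by unfold eps; split_ifs <;> norm_num
  show par a b l * par a b p = par a b p * par a b l
  conv_lhs => rw [par.eq_1 a b p]
  conv_rhs => rw [par.eq_1 a b p]
  rw [mul_smul_comm, smul_mul_assoc, ← mul_assoc, h.par_a, smul_mul_assoc, mul_assoc, h.par_b,
    mul_smul_comm, smul_smul, smul_smul, mul_assoc, e, mul_one, mul_assoc]

lemma MajP.par_gprod (h : MajP a b) (lam : Fin n → ℝ) (l : Fin n) (L : List (Fin n)) :
    Commute (par a b l) (gprod lam a b L) := by
  apply Commute.list_prod_right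
  intro x hx
  obtain ⟨j, -, rfl⟩ := List.mem_map.mp hx
  exact (Commute.one_right _).add_right ((h.par_comm l j).smul_right _)

lemma MajP.a_gprod (h : MajP a b) (lam : Fin n → ℝ) (l : Fin n) (L : List (Fin n)) (hl : l ∉ L) :
    Commute (a l) (gprod lam a b L) := by
  apply Commute.list_prod_right
  intro x hx
  obtain ⟨j, hj, rfl⟩ := List.mem_map.mp hx
  refine (Commute.one_right _).add_right (Commute.smul_right ?_ _)
  have := h.par_a j l
  rw [eps, if_neg (by rintro rfl; exact hl hj), one_smul] at this
  exact this.symm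

lemma MajP.trace_par_zero (h : MajP a b) (p : Fin n) (Z : Matrix (Fin (2^n)) (Fin (2^n)) ℂ)
    (hZ : Commute (a p) Z) : (par a b p * Z).trace = 0 := by
  have h1 : a p * par a b p = -(par a b p * a p) := by
    have := h.par_a p p
    rw [eps, if_pos rfl] at this
    rw [this]; simp
  have h2 : (par a b p * Z).trace = -(par a b p * Z).trace := by
    calc (par a b p * Z).trace = (a p * (a p * (par a b p * Z))).trace := by
          rw [← mul_assoc (a p), h.asq, one_mul]
      _ = -(a p * (par a b p * (Z * a p))).trace := by
          rw [← mul_assoc (a p) (par a b p), h1, neg_mul, mul_assoc, hZ.eq]; simp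
      _ = -(par a b p * Z).trace := by
          rw [Matrix.trace_mul_comm]; simp only [mul_assoc, h.asq, mul_one]
  exact self_eq_neg.mp h2

lemma MajP.gprod_split (h : MajP a b) (lam : Fin n → ℝ) (p : Fin n) :
    ∀ L : List (Fin n), L.Nodup → p ∈ L → ∃ G', Commute (a p) G' ∧ Commute (par a b p) G' ∧
      gprod lam a b L = (1 + (lam p : ℂ) • par a b p) * G' := by
  intro L
  induction L with
  | nil => simp
  | cons l L ih =>
    intro hnd hp
    rw [List.nodup_cons] at hnd
    by_cases e : p = l
    · subst e
      exact ⟨gprod lam a b L, h.a_gprod lam p L hnd.1, h.par_gprod lam p L, by simp [gprod]⟩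
    · obtain ⟨G', h1, h2, h3⟩ := ih hnd.2 (by simpa [e] using hp)
      have c1 : Commute (1 + (lam l : ℂ) • par a b l) (1 + (lam p : ℂ) • par a b p) :=
        (Commute.one_left _).add_left (((Commute.one_right _).add_right
          ((h.par_comm l p).smul_right _)).smul_left _)
      refine ⟨(1 + (lam l : ℂ) • par a b l) * G', ?_, ?_, ?_⟩
      · refine Commute.mul_right ?_ h1
        simpa [gprod] using h.a_gprod lam p [l] (by simpa using e)
      · refine Commute.mul_right ?_ h2
        simpa [gprod] using h.par_gprod lam p [l]
      · rw [← mul_assoc, ← c1.eq, mul_assoc, ← h3]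
        simp [gprod]

lemma MajP.trace_gprod (h : MajP a b) (lam : Fin n → ℝ) :
    ∀ L : List (Fin n), L.Nodup → (gprod lam a b L).trace = (2:ℂ)^n := by
  intro L
  induction L with
  | nil => simp [gprod]
  | cons l L ih =>
    intro hnd
    rw [List.nodup_cons] at hnd
    have : gprod lam a b (l :: L) = gprod lam a b L + (lam l : ℂ) • (par a b l * gprod lam a b L) := by
      simp [gprod, add_mul]
    rw [this, Matrix.trace_add, Matrix.trace_smul,
      h.trace_par_zero l _ (h.a_gprod lam l L hnd.1), ih hnd.2]
    simp

lemma MajP.trace_gprod_par (h : MajP a b) (lam : Fin n → ℝ) (L : List (Fin n)) (hL : L.Nodup)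
    (p : Fin n) (hp : p ∈ L) (Y : Matrix (Fin (2^n)) (Fin (2^n)) ℂ) (hY : Commute (a p) Y) :
    (gprod lam a b L * (par a b p * Y)).trace = lam p * (gprod lam a b L * Y).trace := by
  obtain ⟨G', h1, h2, h3⟩ := h.gprod_split lam p L hL hp
  have z : (par a b p * (G' * Y)).trace = 0 := h.trace_par_zero p _ (h1.mul_right hY)
  have e1 : gprod lam a b L * (par a b p * Y) =
      par a b p * (G' * Y) + (lam p : ℂ) • (G' * Y) := by
    rw [h3, mul_assoc, ← mul_assoc G', ← h2.eq, mul_assoc (par a b p), add_mul, one_mul,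
      smul_mul_assoc, ← mul_assoc (par a b p) (par a b p), h.par_sq, one_mul]
  have e2 : gprod lam a b L * Y = G' * Y + (lam p : ℂ) • (par a b p * (G' * Y)) := by
    rw [h3, mul_assoc, add_mul, one_mul, smul_mul_assoc]
  rw [e1, e2]
  simp only [Matrix.trace_add, Matrix.trace_smul, z]
  simp

lemma MajP.trace_odd (h : MajP a b) (lam : Fin n → ℝ) (L : List (Fin n))
    (l : Fin n) (X : Matrix (Fin (2^n)) (Fin (2^n)) ℂ) (hX : par a b l * X = -(X * par a b l)) :
    (gprod lam a b L * X).trace = 0 := by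
  have hc := (h.par_gprod lam l L).eq
  have h2 : (gprod lam a b L * X).trace = -(gprod lam a b L * X).trace := by
    calc (gprod lam a b L * X).trace
        = (par a b l * (par a b l * (gprod lam a b L * X))).trace := by
          rw [← mul_assoc (par a b l), h.par_sq, one_mul]
      _ = -(par a b l * (gprod lam a b L * (X * par a b l))).trace := by
          rw [← mul_assoc (par a b l) (gprod lam a b L), hc, mul_assoc, hX]; simp
      _ = -(gprod lam a b L * X).trace := by
          rw [Matrix.trace_mul_comm]; simp only [mul_assoc, h.par_sq, mul_one]
  exact self_eq_neg.mp h2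

lemma MajP.trace_two (h : MajP a b) (lam : Fin n → ℝ) (L : List (Fin n)) (hL : L.Nodup)
    (hp : ∀ p, p ∈ L) (p r : Fin n) :
    (gprod lam a b L * (Complex.I • (a p * b r))).trace
      = 2^n * ((if p = r then 1 else 0) * (lam p : ℂ)) := by
  split_ifs with e
  · subst e
    have := h.trace_gprod_par lam L hL p (hp p) 1 (Commute.one_right _)
    rw [mul_one, mul_one, h.trace_gprod lam L hL] at this
    change (gprod lam a b L * par a b p).trace = _
    rw [this]; ring
  · rw [zero_mul, mul_zero]
    apply h.trace_odd lam L p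
    rw [mul_smul_comm, smul_mul_assoc, ← mul_assoc, h.par_a, smul_mul_assoc, mul_assoc, h.par_b,
      mul_smul_comm, smul_smul, eps, eps, if_pos rfl, if_neg e]
    simp [mul_assoc]

lemma MajP.trace_four (h : MajP a b) (lam : Fin n → ℝ) (L : List (Fin n)) (hL : L.Nodup)
    (hp : ∀ p, p ∈ L) (p q r s : Fin n) :
    (gprod lam a b L * ((Complex.I • (a p * b q)) * (Complex.I • (a r * b s)))).trace
      = 2^n * ((if p = q then 1 else 0) * (if r = s then 1 else 0) * (lam p * lam r : ℂ)
        - (if p = s then 1 else 0) * (if q = r then 1 else 0) * (lam p * lam q : ℂ)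
        + (if p = r then 1 else 0) * (if q = s then 1 else 0)) := by
  have odd : ∀ l, eps l p * eps l q * eps l r * eps l s = -1 →
      (gprod lam a b L * ((Complex.I • (a p * b q)) * (Complex.I • (a r * b s)))).trace = 0 := by
    intro l hl
    apply h.trace_odd lam L l
    have : par a b l * (a p * (b q * (a r * b s))) =
        (eps l p * eps l q * eps l r * eps l s) • (a p * (b q * (a r * b s)) * par a b l) := by
      rw [← mul_assoc, h.par_a, smul_mul_assoc, mul_assoc, ← mul_assoc _ (b q), h.par_b,
        smul_mul_assoc, mul_assoc (b q), ← mul_assoc _ (a r), h.par_a, smul_mul_assoc,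
        mul_assoc (a r), h.par_b]
      simp only [mul_smul_comm, smul_smul, mul_assoc]
    rw [hl] at this
    simp only [smul_mul_assoc, mul_smul_comm, mul_assoc] at this ⊢
    rw [this]
    simp
  have pp : ∀ u v : Fin n, u ≠ v →
      (gprod lam a b L * (par a b u * par a b v)).trace = 2^n * (lam u * lam v) := by
    intro u v huv
    have c1 : Commute (a u) (par a b v) := by
      have := h.par_a v u
      rw [eps, if_neg huv.symm, one_smul] at this
      exact this.symm
    rw [h.trace_gprod_par lam L hL u (hp u) _ c1]
    have := h.trace_gprod_par lam L hL v (hp v) 1 (Commute.one_right _)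
    rw [mul_one, mul_one, h.trace_gprod lam L hL] at this
    rw [this]; ring
  by_cases pq : p = q
  · subst pq
    by_cases rs : r = s
    · subst rs
      by_cases pr : p = r
      · subst pr
        have : (Complex.I • (a p * b p)) * (Complex.I • (a p * b p)) = 1 := h.par_sq p
        rw [this, mul_one, h.trace_gprod lam L hL]
        simp
      · have := pp p r pr
        change (gprod lam a b L * (par a b p * par a b r)).trace = _
        rw [this]; simp [pr]
    · by_cases pr : p = r
      · subst pr
        rw [odd s (by simp [eps, Ne.symm rs])]
        simp [rs]
      · rw [odd r (by simp [eps, Ne.symm pr, rs])]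
        by_cases ps : p = s <;> simp [rs, pr]
  · by_cases ps : p = s
    · subst ps
      by_cases qr : q = r
      · subst qr
        have : (Complex.I • (a p * b q)) * (Complex.I • (a q * b p)) =
            -(par a b p * par a b q) := by
          unfold par
          have h1 : b q * (a q * b p) = - (b p * (b q * a q)) * (-1) := by
            have : b p * (b q * a q) = b q * a q * b p := by
              rw [← mul_assoc, h.bb' pq, neg_mul, mul_assoc, h.ba' p q]
              simp [mul_assoc]
            rw [this]; simp [mul_assoc]
          simp only [smul_mul_assoc, mul_smul_comm, mul_assoc, h1, h.ba' q q]
          simp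
        rw [this, mul_neg, Matrix.trace_neg, pp p q pq]
        simp [pq, Ne.symm pq]
      · rw [odd q (by simp [eps, Ne.symm pq, qr])]
        simp [Ne.symm pq, pq, qr]
    · by_cases pr : p = r
      · subst pr
        by_cases qs : q = s
        · subst qs
          have : (Complex.I • (a p * b q)) * (Complex.I • (a p * b q)) = 1 := by
            simp only [smul_mul_assoc, mul_smul_comm, mul_assoc]
            rw [← mul_assoc (b q), h.ba' q p]
            simp only [neg_mul, mul_neg, mul_assoc, h.bsq]
            simp [h.asq, smul_smul]
          rw [this, mul_one, h.trace_gprod lam L hL]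
          simp [pq]
        · rw [odd q (by simp [eps, Ne.symm pq, qs])]
          simp [pq, qs, ps]
      · rw [odd p (by simp [eps, pq, pr, ps])]
        simp [pq, pr, ps]

end moments

section gauss
variable {n : ℕ}

lemma spec_decomp (M : Matrix (Fin n) (Fin n) ℝ) (h0 : M.PosSemidef) (h1 : (1 - M).PosSemidef) :
    ∃ (O : Matrix (Fin n) (Fin n) ℝ) (lam : Fin n → ℝ), O * Oᵀ = 1 ∧
      (∀ j, lam j ∈ Set.Icc (-1:ℝ) 1) ∧
      ∀ j k, ∑ p, O p j * O p k * lam p = 2 * M j k - (if j = k then 1 else 0) := by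
  have hM : M.IsHermitian := h0.1
  set U : Matrix (Fin n) (Fin n) ℝ := (hM.eigenvectorUnitary : Matrix (Fin n) (Fin n) ℝ) with hU
  have hUU : Uᵀ * U = 1 := by
    have := (Matrix.mem_unitaryGroup_iff' (A := U)).mp hM.eigenvectorUnitary.2
    simpa [Matrix.star_eq_conjTranspose] using this
  have hUU' : U * Uᵀ = 1 := mul_eq_one_comm.mp hUU
  have hspec : M = U * diagonal hM.eigenvalues * Uᵀ := by
    have := hM.spectral_theorem
    simpa [Unitary.conjStarAlgAut_apply, Matrix.star_eq_conjTranspose, Function.comp_def] using this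
  have hdiag : Uᵀ * (1 - M) * U = diagonal fun i => 1 - hM.eigenvalues i := by
    have e2 : Uᵀ * M * U = diagonal hM.eigenvalues := by
      calc Uᵀ * M * U = Uᵀ * (U * diagonal hM.eigenvalues * Uᵀ) * U := by rw [← hspec]
        _ = (Uᵀ * U) * diagonal hM.eigenvalues * (Uᵀ * U) := by simp only [mul_assoc]
        _ = _ := by rw [hUU]; simp
    rw [mul_sub, sub_mul, mul_one, hUU, e2, ← diagonal_one, diagonal_sub]
  have hle : ∀ i, hM.eigenvalues i ≤ 1 := by
    intro i
    have hp : (diagonal fun i => 1 - hM.eigenvalues i : Matrix (Fin n) (Fin n) ℝ).PosSemidef := by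
      rw [← hdiag]
      have := h1.conjTranspose_mul_mul_same U
      simpa using this
    have := (posSemidef_diagonal_iff.mp hp) i
    linarith
  refine ⟨Uᵀ, fun i => 2 * hM.eigenvalues i - 1, by simpa using hUU, ?_, ?_⟩
  · intro j
    have a1 := h0.eigenvalues_nonneg j
    have a2 := hle j
    constructor <;> linarith
  · intro j k
    have e1 : M j k = ∑ p, U j p * U k p * hM.eigenvalues p := by
      conv_lhs => rw [hspec]
      rw [Matrix.mul_apply]
      simp only [Matrix.mul_diagonal, Matrix.transpose_apply]
      exact Finset.sum_congr rfl fun p _ => by ring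
    have e2 : ∑ p, U j p * U k p = if j = k then 1 else 0 := by
      have := congrFun (congrFun hUU' j) k
      rwa [Matrix.mul_apply, Matrix.one_apply] at this
    rw [e1, ← e2, Finset.mul_sum, ← Finset.sum_sub_distrib]
    exact Finset.sum_congr rfl fun p _ => by simp only [Matrix.transpose_apply]; ring

/-- The mode-index equivalence. -/
def modeEquiv (n : ℕ) : Fin n × Fin 2 ≃ Fin (2*n) :=
  finProdFinEquiv.trans (finCongr (mul_comm n 2))

lemma modeEquiv_zero (j : Fin n) : modeEquiv n (j, 0) = ⟨2*j, by have := j.isLt; omega⟩ := by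
  ext; simp [modeEquiv]
lemma modeEquiv_one (j : Fin n) : modeEquiv n (j, 1) = ⟨2*j+1, by have := j.isLt; omega⟩ := by
  ext; simp [modeEquiv]; omega

/-- The rotation in `SO(2n)` acting identically on both Majorana species. -/
def bigR (O : Matrix (Fin n) (Fin n) ℝ) : Matrix (Fin (2*n)) (Fin (2*n)) ℝ :=
  Matrix.reindex (modeEquiv n) (modeEquiv n) (kroneckerMap (· * ·) O (1 : Matrix (Fin 2) (Fin 2) ℝ))

lemma bigR_mul (O : Matrix (Fin n) (Fin n) ℝ) (hO : O * Oᵀ = 1) : bigR O * (bigR O)ᵀ = 1 := by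
  unfold bigR
  rw [Matrix.transpose_reindex, Matrix.reindex_apply, Matrix.reindex_apply,
    Matrix.submatrix_mul_equiv, ← Matrix.kroneckerMap_transpose, ← Matrix.mul_kronecker_mul, hO]
  simp

lemma bigR_det (O : Matrix (Fin n) (Fin n) ℝ) (hO : O * Oᵀ = 1) : (bigR O).det = 1 := by
  unfold bigR
  rw [Matrix.det_reindex_self, Matrix.det_kronecker]
  have : O.det * O.det = 1 := by
    have := congrArg Matrix.det hO
    simpa using this
  simp [sq, this]

lemma bigR_apply (O : Matrix (Fin n) (Fin n) ℝ) (j k : Fin n) (x y : Fin 2) :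
    bigR O (modeEquiv n (j, x)) (modeEquiv n (k, y)) = O j k * (if x = y then 1 else 0) := by
  unfold bigR
  rw [Matrix.reindex_apply, Matrix.submatrix_apply, Equiv.symm_apply_apply,
    Equiv.symm_apply_apply, Matrix.kroneckerMap_apply, Matrix.one_apply]

lemma bigR_sum_zero (O : Matrix (Fin n) (Fin n) ℝ)
    (c : Fin (2*n) → Matrix (Fin (2^n)) (Fin (2^n)) ℂ) (j : Fin n) :
    (∑ k, ((bigR O ⟨2*j, by have := j.isLt; omega⟩ k : ℝ) : ℂ) • c k) = rot O (majA n c) j := by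
  rw [← modeEquiv_zero, ← (modeEquiv n).sum_comp, Fintype.sum_prod_type]
  simp only [bigR_apply, Fin.sum_univ_two]
  simp [rot, majA, modeEquiv_zero]

lemma bigR_sum_one (O : Matrix (Fin n) (Fin n) ℝ)
    (c : Fin (2*n) → Matrix (Fin (2^n)) (Fin (2^n)) ℂ) (j : Fin n) :
    (∑ k, ((bigR O ⟨2*j+1, by have := j.isLt; omega⟩ k : ℝ) : ℂ) • c k) = rot O (majB n c) j := by
  rw [← modeEquiv_one, ← (modeEquiv n).sum_comp, Fintype.sum_prod_type]
  simp only [bigR_apply, Fin.sum_univ_two]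
  simp [rot, majB, modeEquiv_one]

lemma gaussOf_bigR (O : Matrix (Fin n) (Fin n) ℝ) (lam : Fin n → ℝ)
    (c : Fin (2*n) → Matrix (Fin (2^n)) (Fin (2^n)) ℂ) :
    gaussOf n c lam (bigR O) = ((2:ℂ)^n)⁻¹ •
      gprod lam (rot O (majA n c)) (rot O (majB n c)) (List.finRange n) := by
  unfold gaussOf gprod par
  simp only [bigR_sum_zero, bigR_sum_one, smul_smul, mul_comm Complex.I]

lemma sum4 (f g : Fin n → ℂ) (lam : Fin n → ℂ) :
    ∑ p, ∑ q, ∑ r, ∑ s, (f p * f q * (g r * g s)) *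
      ((if p = q then 1 else 0) * (if r = s then 1 else 0) * (lam p * lam r)
        - (if p = s then 1 else 0) * (if q = r then 1 else 0) * (lam p * lam q)
        + (if p = r then 1 else 0) * (if q = s then 1 else 0))
    = (∑ p, f p * f p * lam p) * (∑ p, g p * g p * lam p)
      - (∑ p, f p * g p * lam p) * (∑ p, f p * g p * lam p)
      + (∑ p, f p * g p) * (∑ p, f p * g p) := by
  simp only [mul_add, mul_sub, Finset.sum_add_distrib, Finset.sum_sub_distrib, ite_mul, mul_ite,
    mul_one, mul_zero, one_mul, zero_mul, Finset.sum_ite_eq, Finset.mem_univ, if_true,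
    Finset.sum_mul_sum, Finset.sum_ite_irrel, Finset.sum_const_zero]
  congr 1
  · congr 1
    all_goals exact Finset.sum_congr rfl fun p _ => Finset.sum_congr rfl fun q _ => by ring
  · exact Finset.sum_congr rfl fun p _ => Finset.sum_congr rfl fun q _ => by ring

lemma rot_mul_rot (O : Matrix (Fin n) (Fin n) ℝ)
    (a b : Fin n → Matrix (Fin (2^n)) (Fin (2^n)) ℂ) (j k : Fin n) :
    Complex.I • (rot Oᵀ a j * rot Oᵀ b k) =
      ∑ p, ∑ q, ((O p j : ℂ) * (O q k : ℂ)) • (Complex.I • (a p * b q)) := by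
  unfold rot
  simp only [Finset.sum_mul_sum, Finset.smul_sum, smul_mul_smul_comm, Matrix.transpose_apply]
  exact Finset.sum_congr rfl fun p _ => Finset.sum_congr rfl fun q _ => by rw [smul_comm]

theorem gauss_exists (c : Fin (2*n) → Matrix (Fin (2^n)) (Fin (2^n)) ℂ) (hc : IsMajorana n c)
    (M : Matrix (Fin n) (Fin n) ℝ) (h0 : M.PosSemidef) (h1 : (1 - M).PosSemidef) :
    ∃ ρ, IsGaussianState n c ρ ∧ ρ.trace = 1 ∧
      (∀ j k, (ρ * (Complex.I • (majA n c j * majB n c k))).trace =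
        ((2 * M j k - (if j = k then 1 else 0) : ℝ) : ℂ)) ∧
      (∀ j k, j ≠ k → (ρ * ((Complex.I • (majA n c j * majB n c j)) *
          (Complex.I • (majA n c k * majB n c k)))).trace =
        (((2 * M j j - 1) * (2 * M k k - 1) - (2 * M j k) ^ 2 : ℝ) : ℂ)) := by
  obtain ⟨O, lam, hO, hlam, hM⟩ := spec_decomp M h0 h1
  have hmaj := (majP_of_isMajorana hc).rot O hO
  set a := rot O (majA n c) with ha
  set b := rot O (majB n c) with hb
  have hA : majA n c = rot Oᵀ a := (rot_rot O hO _).symm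
  have hB : majB n c = rot Oᵀ b := (rot_rot O hO _).symm
  have hnd := List.nodup_finRange n
  have hmem : ∀ p : Fin n, p ∈ List.finRange n := List.mem_finRange
  have h2 : ((2:ℂ)^n)⁻¹ * 2^n = 1 := inv_mul_cancel₀ (by positivity)
  have hMC : ∀ j k, ∑ p, (O p j : ℂ) * (O p k : ℂ) * (lam p : ℂ) =
      ((2 * M j k - (if j = k then 1 else 0) : ℝ) : ℂ) := by
    intro j k
    rw [← hM j k]; push_cast; rfl
  set ω : Matrix (Fin (2^n)) (Fin (2^n)) ℂ →ₗ[ℂ] ℂ :=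
    (Matrix.traceLinearMap (Fin (2^n)) ℂ ℂ) ∘ₗ LinearMap.mulLeft ℂ (gaussOf n c lam (bigR O)) with hω
  have hω' : ∀ X, (gaussOf n c lam (bigR O) * X).trace = ω X := fun X => rfl
  have hω2 : ∀ p q, ω (Complex.I • (a p * b q)) = (if p = q then 1 else 0) * (lam p : ℂ) := by
    intro p q
    rw [← hω', gaussOf_bigR, smul_mul_assoc, Matrix.trace_smul,
      hmaj.trace_two lam _ hnd hmem, smul_eq_mul, ← mul_assoc, h2, one_mul]
  have hω4 : ∀ p q r s, ω ((Complex.I • (a p * b q)) * (Complex.I • (a r * b s))) =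
      ((if p = q then 1 else 0) * (if r = s then 1 else 0) * (lam p * lam r : ℂ)
        - (if p = s then 1 else 0) * (if q = r then 1 else 0) * (lam p * lam q : ℂ)
        + (if p = r then 1 else 0) * (if q = s then 1 else 0)) := by
    intro p q r s
    rw [← hω', gaussOf_bigR, smul_mul_assoc, Matrix.trace_smul,
      hmaj.trace_four lam _ hnd hmem, smul_eq_mul, ← mul_assoc, h2, one_mul]
  have hAB : ∀ j k, Complex.I • (majA n c j * majB n c k) =
      ∑ p, ∑ q, ((O p j : ℂ) * (O q k : ℂ)) • (Complex.I • (a p * b q)) := by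
    intro j k
    rw [← rot_mul_rot, ← hA, ← hB]
  clear_value a b ω
  refine ⟨gaussOf n c lam (bigR O), ⟨lam, bigR O, hlam, bigR_mul O hO, bigR_det O hO, rfl⟩,
    ?_, ?_, ?_⟩
  · rw [gaussOf_bigR, Matrix.trace_smul, ← ha, ← hb, hmaj.trace_gprod lam _ hnd, smul_eq_mul, h2]
  · intro j k
    rw [← hMC, hω', hAB]
    simp only [map_sum, map_smul, hω2, smul_eq_mul]
    refine Finset.sum_congr rfl fun p _ => ?_
    rw [Finset.sum_eq_single p]
    · rw [if_pos rfl]; ring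
    · intro q _ hq; rw [if_neg (Ne.symm hq)]; ring
    · simp
  · intro j k hjk
    have e2 : ∑ p, (O p j : ℂ) * (O p k : ℂ) = 0 := by
      have hO' : Oᵀ * O = 1 := mul_eq_one_comm.mp hO
      have := congrFun (congrFun hO' j) k
      rw [Matrix.mul_apply, Matrix.one_apply, if_neg hjk] at this
      have h2 := congrArg (fun x : ℝ => (x : ℂ)) this
      push_cast at h2
      exact h2
    have key := sum4 (fun p => (O p j : ℂ)) (fun p => (O p k : ℂ)) (fun p => (lam p : ℂ))
    rw [hMC, hMC, hMC, e2, if_pos rfl, if_pos rfl, if_neg hjk] at key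
    have : (((2 * M j j - 1) * (2 * M k k - 1) - (2 * M j k) ^ 2 : ℝ) : ℂ) =
      ((2 * M j j - 1 : ℝ) : ℂ) * ((2 * M k k - 1 : ℝ) : ℂ) -
        ((2 * M j k - 0 : ℝ) : ℂ) * ((2 * M j k - 0 : ℝ) : ℂ) + 0 * 0 := by
      push_cast; ring
    rw [this, ← key, hω', hAB, hAB]
    simp only [Finset.sum_mul]
    simp only [Finset.mul_sum]
    simp only [map_sum]
    refine Finset.sum_congr rfl fun p _ => Finset.sum_congr rfl fun q _ =>
      Finset.sum_congr rfl fun r _ => Finset.sum_congr rfl fun s _ => ?_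
    rw [smul_mul_smul_comm, map_smul, hω4, smul_eq_mul]
end gauss

section final
variable {n : ℕ}

lemma ann_conj {c : Fin (2*n) → Matrix (Fin (2^n)) (Fin (2^n)) ℂ} (hc : IsMajorana n c)
    (j : Fin n) : (ann n c j)ᴴ = ((1:ℂ)/2) • (majA n c j - Complex.I • majB n c j) := by
  have h1 : (majA n c j)ᴴ = majA n c j := hc.1 _
  have h2 : (majB n c j)ᴴ = majB n c j := hc.1 _
  unfold ann
  rw [conjTranspose_smul, conjTranspose_add, conjTranspose_smul, h1, h2]
  simp [sub_eq_add_neg]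

lemma I_I_smul (X : Matrix (Fin (2^n)) (Fin (2^n)) ℂ) : Complex.I • Complex.I • X = -X := by
  rw [smul_smul, Complex.I_mul_I, neg_one_smul]

lemma ann_mul {c : Fin (2*n) → Matrix (Fin (2^n)) (Fin (2^n)) ℂ} (hc : IsMajorana n c)
    (j k : Fin n) : (ann n c j)ᴴ * ann n c k = ((1:ℂ)/4) • (majA n c j * majA n c k
      + majB n c j * majB n c k + Complex.I • (majA n c j * majB n c k)
      + Complex.I • (majA n c k * majB n c j)) := by
  rw [ann_conj hc, ann, smul_mul_smul_comm]
  have := (majP_of_isMajorana hc).ba' j k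
  simp only [sub_mul, mul_add, smul_mul_assoc, mul_smul_comm, this, smul_add, smul_sub, smul_neg, I_I_smul]
  module

lemma ann_mul' {c : Fin (2*n) → Matrix (Fin (2^n)) (Fin (2^n)) ℂ} (hc : IsMajorana n c)
    (j k : Fin n) : ann n c k * (ann n c j)ᴴ = ((1:ℂ)/4) • (majA n c k * majA n c j
      + majB n c k * majB n c j - Complex.I • (majA n c j * majB n c k)
      - Complex.I • (majA n c k * majB n c j)) := by
  rw [ann_conj hc, ann, smul_mul_smul_comm]
  have := (majP_of_isMajorana hc).ba' k j
  simp only [mul_sub, add_mul, smul_mul_assoc, mul_smul_comm, this, smul_add, smul_sub, smul_neg, I_I_smul]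
  module

lemma ann_car {c : Fin (2*n) → Matrix (Fin (2^n)) (Fin (2^n)) ℂ} (hc : IsMajorana n c)
    (j k : Fin n) : (ann n c j)ᴴ * ann n c k + ann n c k * (ann n c j)ᴴ
      = if j = k then 1 else 0 := by
  have h := majP_of_isMajorana hc
  have e : (ann n c j)ᴴ * ann n c k + ann n c k * (ann n c j)ᴴ =
      ((1:ℂ)/4) • ((majA n c j * majA n c k + majA n c k * majA n c j) +
        (majB n c j * majB n c k + majB n c k * majB n c j)) := by
    rw [ann_mul hc, ann_mul' hc, ← smul_add]
    congr 1
    abel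
  rw [e, h.aa, h.bb]
  split_ifs
  · rw [← add_smul, smul_smul]; norm_num
  · simp

lemma ann_ann {c : Fin (2*n) → Matrix (Fin (2^n)) (Fin (2^n)) ℂ} (hc : IsMajorana n c)
    {j k : Fin n} (hjk : j ≠ k) : ann n c j * ann n c k = - (ann n c k * ann n c j) := by
  have h := majP_of_isMajorana hc
  unfold ann
  rw [smul_mul_smul_comm, smul_mul_smul_comm, ← smul_neg]
  congr 1
  simp only [mul_add, add_mul, smul_mul_assoc, mul_smul_comm, h.ba',
    h.aa' hjk, h.bb' hjk]
  simp
  abel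

lemma num_eq {c : Fin (2*n) → Matrix (Fin (2^n)) (Fin (2^n)) ℂ} (hc : IsMajorana n c)
    (j : Fin n) : num n c j = ((1:ℂ)/2) • (1 + Complex.I • (majA n c j * majB n c j)) := by
  have h := majP_of_isMajorana hc
  rw [num, ann_mul hc, h.asq, h.bsq]
  module

lemma hop_eq {c : Fin (2*n) → Matrix (Fin (2^n)) (Fin (2^n)) ℂ} (hc : IsMajorana n c)
    {j k : Fin n} (hjk : j ≠ k) :
    -((ann n c j)ᴴ * ann n c k) - (ann n c k)ᴴ * ann n c j = (-(1:ℂ)/2) •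
      (Complex.I • (majA n c j * majB n c k) + Complex.I • (majA n c k * majB n c j)) := by
  have h := majP_of_isMajorana hc
  rw [ann_mul hc, ann_mul hc, h.aa' hjk, h.bb' hjk]
  module

lemma num_num {c : Fin (2*n) → Matrix (Fin (2^n)) (Fin (2^n)) ℂ} (hc : IsMajorana n c)
    {j k : Fin n} (hjk : j ≠ k) :
    num n c j * num n c k = (ann n c k * ann n c j)ᴴ * (ann n c k * ann n c j) := by
  have h1 : ann n c j * (ann n c k)ᴴ = -((ann n c k)ᴴ * ann n c j) := by
    have := ann_car hc k j
    rw [if_neg hjk.symm] at this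
    exact eq_neg_of_add_eq_zero_right this
  rw [conjTranspose_mul, num, num, mul_assoc, ← mul_assoc (ann n c j), h1, mul_assoc, neg_mul,
    mul_assoc, ann_ann hc hjk]
  simp

lemma psd_trace {m : Type*} [Fintype m] [DecidableEq m] {ρ : Matrix m m ℂ} (h : ρ.PosSemidef)
    (X : Matrix m m ℂ) : 0 ≤ (ρ * (Xᴴ * X)).trace.re := by
  have h1 := (h.mul_mul_conjTranspose_same X).trace_nonneg
  rw [Matrix.trace_mul_comm, ← mul_assoc, Matrix.trace_mul_comm] at h1
  exact (Complex.le_def.mp h1).1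

/-- Real one-particle correlation matrix. -/
def corr (n : ℕ) (c : Fin (2*n) → Matrix (Fin (2^n)) (Fin (2^n)) ℂ)
    (ρ : Matrix (Fin (2^n)) (Fin (2^n)) ℂ) : Matrix (Fin n) (Fin n) ℝ :=
  Matrix.of fun j k => (ρ * ((ann n c j)ᴴ * ann n c k)).trace.re

lemma corr_symm {c : Fin (2*n) → Matrix (Fin (2^n)) (Fin (2^n)) ℂ}
    {ρ : Matrix (Fin (2^n)) (Fin (2^n)) ℂ} (hρ : ρ.PosSemidef) (j k : Fin n) :
    corr n c ρ j k = corr n c ρ k j := by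
  have : (ρ * ((ann n c j)ᴴ * ann n c k)).trace = star (ρ * ((ann n c k)ᴴ * ann n c j)).trace := by
    rw [← Matrix.trace_conjTranspose, conjTranspose_mul, conjTranspose_mul, hρ.1.eq,
      conjTranspose_conjTranspose, Matrix.trace_mul_comm]
  simp [corr, this]

lemma trace_expand (v : Fin n → ℝ) (ρ : Matrix (Fin (2^n)) (Fin (2^n)) ℂ)
    (X Y : Fin n → Matrix (Fin (2^n)) (Fin (2^n)) ℂ) :
    (ρ * ((∑ j, (v j : ℂ) • X j) * (∑ k, (v k : ℂ) • Y k))).trace.re =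
      ∑ j, ∑ k, v j * v k * (ρ * (X j * Y k)).trace.re := by
  rw [Finset.sum_mul_sum]
  simp only [Finset.mul_sum, Matrix.trace_sum,
    mul_smul_comm, Matrix.trace_smul, Complex.re_sum, smul_eq_mul]
  refine Finset.sum_congr rfl fun j _ => Finset.sum_congr rfl fun k _ => ?_
  rw [smul_mul_assoc, mul_smul_comm, Matrix.trace_smul, smul_eq_mul, Complex.re_ofReal_mul,
    Complex.re_ofReal_mul]
  ring

lemma quad (M : Matrix (Fin n) (Fin n) ℝ) (v : Fin n → ℝ) :
    star v ⬝ᵥ M *ᵥ v = ∑ j, ∑ k, v j * v k * M j k := by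
  simp only [dotProduct, mulVec, Finset.mul_sum]
  exact Finset.sum_congr rfl fun j _ => Finset.sum_congr rfl fun k _ => by simp; ring

lemma ann_sum_conj (c : Fin (2*n) → Matrix (Fin (2^n)) (Fin (2^n)) ℂ) (v : Fin n → ℝ) :
    (∑ j, (v j : ℂ) • ann n c j)ᴴ = ∑ j, (v j : ℂ) • (ann n c j)ᴴ := by
  simp [Matrix.conjTranspose_sum, conjTranspose_smul]

lemma corr_psd {c : Fin (2*n) → Matrix (Fin (2^n)) (Fin (2^n)) ℂ}
    {ρ : Matrix (Fin (2^n)) (Fin (2^n)) ℂ} (hρ : ρ.PosSemidef) : (corr n c ρ).PosSemidef := by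
  refine Matrix.PosSemidef.of_dotProduct_mulVec_nonneg ?_ ?_
  · ext j k; simpa using corr_symm hρ k j
  · intro v
    rw [quad]
    have := psd_trace hρ (∑ j, (v j : ℂ) • ann n c j)
    rw [ann_sum_conj, trace_expand] at this
    exact this

lemma corr_psd' {c : Fin (2*n) → Matrix (Fin (2^n)) (Fin (2^n)) ℂ} (hc : IsMajorana n c)
    {ρ : Matrix (Fin (2^n)) (Fin (2^n)) ℂ} (hρ : ρ.PosSemidef) (htr : ρ.trace = 1) :
    (1 - corr n c ρ).PosSemidef := by
  refine Matrix.PosSemidef.of_dotProduct_mulVec_nonneg ?_ ?_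
  · exact isHermitian_one.sub (corr_psd hρ).1
  · intro v
    rw [quad]
    have := psd_trace hρ (∑ j, (v j : ℂ) • (ann n c j)ᴴ)
    rw [← ann_sum_conj, conjTranspose_conjTranspose, ann_sum_conj, trace_expand] at this
    refine this.trans_eq ?_
    refine Finset.sum_congr rfl fun j _ => Finset.sum_congr rfl fun k _ => ?_
    congr 1
    have e : ann n c j * (ann n c k)ᴴ = (if k = j then 1 else 0) - (ann n c k)ᴴ * ann n c j := by
      rw [← ann_car hc k j]; abel
    rw [e, mul_sub, Matrix.trace_sub, Matrix.sub_apply, Matrix.one_apply, corr_symm hρ]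
    by_cases hjk : j = k
    · subst hjk; simp [htr, corr]
    · rw [if_neg hjk, if_neg (Ne.symm hjk)]; simp [corr]

/-- Energy of the Gaussian state with real correlation matrix `M`. -/
def energy (E E' : Finset (Fin n × Fin n)) (w w' : Fin n × Fin n → ℝ)
    (M : Matrix (Fin n) (Fin n) ℝ) : ℝ :=
  ∑ e ∈ E, w e * (1/4 - (M e.1 e.1 * M e.2 e.2 - M e.1 e.2 ^ 2)) +
    ∑ e ∈ E', w' e * (-2 * M e.1 e.2)

/-- The Hamiltonian. -/
def ham (c : Fin (2*n) → Matrix (Fin (2^n)) (Fin (2^n)) ℂ) (E E' : Finset (Fin n × Fin n))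
    (w w' : Fin n × Fin n → ℝ) : Matrix (Fin (2^n)) (Fin (2^n)) ℂ :=
  ∑ e ∈ E, (w e : ℂ) • (((1:ℂ)/4) • 1 - num n c e.1 * num n c e.2)
        + ∑ e ∈ E', (w' e : ℂ) •
            (-((ann n c e.1)ᴴ * ann n c e.2) - (ann n c e.2)ᴴ * ann n c e.1)

theorem gauss_energy (c : Fin (2*n) → Matrix (Fin (2^n)) (Fin (2^n)) ℂ) (hc : IsMajorana n c)
    (E E' : Finset (Fin n × Fin n))
    (hE : ∀ e ∈ E, e.1 < e.2) (hE' : ∀ e ∈ E', e.1 < e.2) (w w' : Fin n × Fin n → ℝ)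
    (M : Matrix (Fin n) (Fin n) ℝ) (h0 : M.PosSemidef) (h1 : (1 - M).PosSemidef) :
    ∃ ρ, IsGaussianState n c ρ ∧ (ρ * ∑ j, num n c j).trace = ((∑ j, M j j : ℝ) : ℂ) ∧
      (ρ * ham c E E' w w').trace = ((energy E E' w w' M : ℝ) : ℂ) := by
  obtain ⟨ρ, hg, htr, h2, h4⟩ := gauss_exists c hc M h0 h1
  refine ⟨ρ, hg, ?_, ?_⟩
  · rw [Finset.mul_sum, Matrix.trace_sum]
    push_cast
    refine Finset.sum_congr rfl fun j _ => ?_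
    rw [num_eq hc, mul_smul_comm, Matrix.trace_smul, mul_add, Matrix.trace_add, mul_one, htr, h2]
    simp
  · unfold ham energy
    rw [mul_add, Matrix.trace_add, Finset.mul_sum, Finset.mul_sum, Matrix.trace_sum,
      Matrix.trace_sum]
    push_cast
    congr 1
    · refine Finset.sum_congr rfl fun e he => ?_
      have hne := (hE e he).ne
      rw [mul_smul_comm, Matrix.trace_smul, smul_eq_mul, mul_sub, Matrix.trace_sub, mul_smul_comm,
        mul_one, Matrix.trace_smul, htr, num_eq hc, num_eq hc, smul_mul_smul_comm, mul_smul_comm,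
        Matrix.trace_smul]
      have e4 : ∀ X Y : Matrix (Fin (2^n)) (Fin (2^n)) ℂ, ρ * ((1 + X) * (1 + Y)) =
          ρ + ρ * X + ρ * Y + ρ * (X * Y) := by intro X Y; noncomm_ring
      rw [e4, Matrix.trace_add, Matrix.trace_add, Matrix.trace_add, h2, h2, h4 _ _ hne, htr,
        if_pos rfl, if_pos rfl, smul_eq_mul, smul_eq_mul]
      push_cast
      ring
    · refine Finset.sum_congr rfl fun e he => ?_
      have hne := (hE' e he).ne
      have hs : M e.2 e.1 = M e.1 e.2 := by simpa using h0.1.apply e.1 e.2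
      rw [mul_smul_comm, Matrix.trace_smul, smul_eq_mul, hop_eq hc hne, mul_smul_comm,
        Matrix.trace_smul, mul_add, Matrix.trace_add, h2, h2, if_neg hne, if_neg hne.symm, hs,
        smul_eq_mul]
      push_cast
      ring

theorem state_energy (c : Fin (2*n) → Matrix (Fin (2^n)) (Fin (2^n)) ℂ) (hc : IsMajorana n c)
    (E E' : Finset (Fin n × Fin n))
    (hE : ∀ e ∈ E, e.1 < e.2) (w w' : Fin n × Fin n → ℝ) (hw : ∀ e ∈ E, 0 ≤ w e)
    (ρ : Matrix (Fin (2^n)) (Fin (2^n)) ℂ) (hρ : ρ.PosSemidef) (htr : ρ.trace = 1) :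
    (ρ * ham c E E' w w').trace.re ≤
      ∑ e ∈ E, w e * (1/4) + ∑ e ∈ E', w' e * (-2 * corr n c ρ e.1 e.2) := by
  unfold ham
  rw [mul_add, Matrix.trace_add, Finset.mul_sum, Finset.mul_sum, Matrix.trace_sum,
      Matrix.trace_sum, Complex.add_re, Complex.re_sum, Complex.re_sum]
  refine add_le_add (Finset.sum_le_sum fun e he => ?_)
    (le_of_eq (Finset.sum_congr rfl fun e he => ?_))
  · rw [mul_smul_comm, Matrix.trace_smul, smul_eq_mul, Complex.re_ofReal_mul]
    refine mul_le_mul_of_nonneg_left ?_ (hw e he)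
    have := psd_trace hρ (ann n c e.2 * ann n c e.1)
    rw [← num_num hc (hE e he).ne] at this
    rw [mul_sub, Matrix.trace_sub, mul_smul_comm, mul_one, Matrix.trace_smul, htr, Complex.sub_re]
    norm_num
    exact this
  · rw [mul_smul_comm, Matrix.trace_smul, smul_eq_mul, Complex.re_ofReal_mul]
    congr 1
    have hs := corr_symm (c := c) hρ e.1 e.2
    have e1 : (ρ * ((ann n c e.1)ᴴ * ann n c e.2)).trace.re = corr n c ρ e.1 e.2 := rfl
    have e2 : (ρ * ((ann n c e.2)ᴴ * ann n c e.1)).trace.re = corr n c ρ e.2 e.1 := rfl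
    rw [mul_sub, mul_neg, Matrix.trace_sub, Matrix.trace_neg, Complex.sub_re, Complex.neg_re,
      e1, e2, ← hs]
    ring

lemma diag_psd_pair (d : Fin n → ℝ) (h0 : ∀ j, 0 ≤ d j) (h1 : ∀ j, d j ≤ 1) :
    (diagonal d).PosSemidef ∧ (1 - diagonal d).PosSemidef := by
  refine ⟨posSemidef_diagonal_iff.mpr h0, ?_⟩
  rw [← diagonal_one, diagonal_sub]
  exact posSemidef_diagonal_iff.mpr fun j => by simpa using h1 j

/-- The classical correlation matrix: all particles on the larger side. -/
lemma exists_classical (hn : 1 ≤ n) (A : Finset (Fin n)) (q : ℕ) (hq : q ≤ n / 2) :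
    ∃ d : Fin n → ℝ, (∀ j, 0 ≤ d j) ∧ (∀ j, d j ≤ 1) ∧ ∑ j, d j = q ∧
      ∀ j k, ((j ∈ A ∧ k ∉ A) ∨ (j ∉ A ∧ k ∈ A)) → d j * d k = 0 := by
  obtain ⟨B, hB, hAB⟩ : ∃ B : Finset (Fin n), n ≤ 2 * B.card ∧ (B = A ∨ B = Aᶜ) := by
    have := A.card_add_card_compl
    rw [Fintype.card_fin] at this
    by_cases h : n ≤ 2 * A.card
    · exact ⟨A, h, Or.inl rfl⟩
    · exact ⟨Aᶜ, by omega, Or.inr rfl⟩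
  have hpos : (0:ℝ) < B.card := by
    have : 0 < B.card := by omega
    exact_mod_cast this
  have hqB : (q:ℝ) ≤ B.card := by
    have : q ≤ B.card := by omega
    exact_mod_cast this
  refine ⟨fun j => if j ∈ B then (q:ℝ) / B.card else 0, ?_, ?_, ?_, ?_⟩
  · intro j; dsimp only; split_ifs
    · positivity
    · exact le_rfl
  · intro j; dsimp only; split_ifs
    · rwa [div_le_one hpos]
    · exact zero_le_one
  · rw [Finset.sum_ite_mem, Finset.univ_inter, Finset.sum_const, nsmul_eq_mul]
    field_simp
  · intro j k h
    rcases hAB with rfl | rfl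
    · rcases h with h | h <;> simp [h.1, h.2]
    · rcases h with h | h <;> simp [h.1, h.2]
end final

/-- `q`-particle traceless CIFH optimization on a bipartite interaction graph:
there is a fermionic Gaussian state with mean particle number `q` achieving approximation
ratio `1/(2((n-2q)/n + 3/2))`. -/
theorem q_particle_traceless_CIFH_gaussian
    (n : ℕ) (hn : 1 ≤ n)
    (c : Fin (2*n) → Matrix (Fin (2^n)) (Fin (2^n)) ℂ) (hc : IsMajorana n c)
    (E E' : Finset (Fin n × Fin n))
    (hE : ∀ e ∈ E, e.1 < e.2) (hE' : ∀ e ∈ E', e.1 < e.2)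
    (w : Fin n × Fin n → ℝ) (hw : ∀ e ∈ E, 0 ≤ w e)
    (w' : Fin n × Fin n → ℝ)
    (A : Finset (Fin n))
    (hbip : ∀ e ∈ E, (e.1 ∈ A ∧ e.2 ∉ A) ∨ (e.1 ∉ A ∧ e.2 ∈ A))
    (q : ℕ) (hq : q ≤ n / 2)
    (H : Matrix (Fin (2^n)) (Fin (2^n)) ℂ)
    (hH : H = ∑ e ∈ E, (w e : ℂ) • (((1:ℂ)/4) • 1 - num n c e.1 * num n c e.2)
        + ∑ e ∈ E', (w' e : ℂ) •
            (-((ann n c e.1)ᴴ * ann n c e.2) - (ann n c e.2)ᴴ * ann n c e.1))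
    (Nhat : Matrix (Fin (2^n)) (Fin (2^n)) ℂ)
    (hNhat : Nhat = ∑ j, num n c j)
    (lamq : ℝ)
    (hlamq : IsGreatest {x : ℝ | ∃ ρ' : Matrix (Fin (2^n)) (Fin (2^n)) ℂ,
        ρ'.PosSemidef ∧ ρ'.trace = 1 ∧ (ρ' * Nhat).trace = (q : ℂ) ∧
        ((ρ' * H).trace).re = x} lamq) :
    ∃ ρ : Matrix (Fin (2^n)) (Fin (2^n)) ℂ,
      IsGaussianState n c ρ ∧ (ρ * Nhat).trace = (q : ℂ) ∧
      ((lamq / (2 * (((n : ℝ) - 2 * q) / n + 3/2)) : ℝ) : ℂ) ≤ (ρ * H).trace := by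
  obtain ⟨⟨ρ', hρ, htr, hN, hx⟩, -⟩ := hlamq
  change H = ham c E E' w w' at hH
  subst hNhat hH
  set W : ℝ := ∑ e ∈ E, w e * (1/4) with hW
  set Γ := corr n c ρ' with hΓ
  set Q : ℝ := ∑ e ∈ E', w' e * (-2 * Γ e.1 e.2) with hQ
  have hW0 : 0 ≤ W := Finset.sum_nonneg fun e he => mul_nonneg (hw e he) (by norm_num)
  have hle : lamq ≤ W + Q := by
    rw [← hx]; exact state_energy c hc E E' hE w w' hw ρ' hρ htr
  have hnR : (1:ℝ) ≤ n := by exact_mod_cast hn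
  have hqR : 2 * (q:ℝ) ≤ n := by
    have : 2 * q ≤ n := by omega
    exact_mod_cast this
  have hq0 : (0:ℝ) ≤ q := Nat.cast_nonneg q
  have hnq : (0:ℝ) < n - q := by linarith
  set D : ℝ := 2 * (((n : ℝ) - 2 * q) / n + 3/2) with hD
  set t : ℝ := n / (4 * (n - q)) with ht
  have hDt : D = 1 + 1 / t := by
    rw [hD, ht]
    have : (n:ℝ) ≠ 0 := by linarith
    field_simp
    ring
  have ht0 : 0 < t := by rw [ht]; positivity
  have ht1 : t ≤ 1/2 := by
    rw [ht, div_le_div_iff₀ (by positivity) (by norm_num)]; linarith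
  have hD1 : 1 ≤ D := by rw [hDt]; have : 0 < 1 / t := by positivity
                         linarith
  by_cases hcase : lamq / D ≤ W
  · obtain ⟨d, d0, d1, dq, dz⟩ := exists_classical hn A q hq
    obtain ⟨p0, p1⟩ := diag_psd_pair d d0 d1
    obtain ⟨ρ, hg, hNρ, hHρ⟩ := gauss_energy c hc E E' hE hE' w w' (diagonal d) p0 p1
    refine ⟨ρ, hg, ?_, ?_⟩
    · rw [hNρ]; simp only [diagonal_apply_eq, dq]; simp
    · rw [hHρ, Complex.real_le_real]
      refine hcase.trans_eq ?_
      unfold energy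
      have z : ∑ e ∈ E', w' e * (-2 * diagonal d e.1 e.2) = 0 :=
        Finset.sum_eq_zero fun e he => by rw [diagonal_apply_ne _ (hE' e he).ne]; ring
      rw [z, add_zero]
      refine Finset.sum_congr rfl fun e he => ?_
      rw [diagonal_apply_ne _ (hE e he).ne, diagonal_apply_eq, diagonal_apply_eq,
        dz _ _ (hbip e he)]
      ring
  · push Not at hcase
    have hDpos : 0 < D := by linarith
    have hl2 : lamq / D ≤ t * Q := by
      have h1 : W * D < lamq := (lt_div_iff₀ hDpos).mp hcase
      rw [div_le_iff₀ hDpos, hDt]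
      have h2 : t * Q * (1 + 1/t) = t * Q + Q := by field_simp
      rw [h2]
      have h3 : W * D = W + W / t := by rw [hDt]; ring
      have h4 : W / t < Q := by linarith
      have h5 : W < Q * t := (div_lt_iff₀ ht0).mp h4
      linarith
    have g0 : ∀ j, 0 ≤ Γ j j := fun j => (corr_psd hρ).diag_nonneg
    have g1 : ∀ j, Γ j j ≤ 1 := fun j => by
      have := (corr_psd' hc hρ htr).diag_nonneg (i := j)
      rw [Matrix.sub_apply, Matrix.one_apply_eq] at this
      linarith
    have gq : ∑ j, Γ j j = q := by
      have := congrArg Complex.re hN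
      rw [Finset.mul_sum, Matrix.trace_sum, Complex.re_sum] at this
      rw [Complex.natCast_re] at this
      exact this
    set α : ℝ := q / (n - q) with hα
    have hα0 : 0 ≤ α := by positivity
    have hα1 : α ≤ 1 := by rw [hα, div_le_one hnq]; linarith
    have hαt : (1 - t) * α ≤ 1/2 := by
      have : (1 - t) * α = (3 * n - 4 * q) * q / (4 * (n - q)^2) := by
        rw [hα, ht]; field_simp; ring
      rw [this, div_le_div_iff₀ (by positivity) (by norm_num)]
      nlinarith [mul_nonneg (show (0:ℝ) ≤ 2 * n - 3 * q by linarith)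
        (show (0:ℝ) ≤ n - 2 * q by linarith)]
    set d : Fin n → ℝ := fun j => α * (1 - Γ j j) with hd
    have d0 : ∀ j, 0 ≤ d j := fun j => mul_nonneg hα0 (by linarith [g1 j])
    have d1 : ∀ j, d j ≤ 1 := fun j => by
      have := g0 j; have := g1 j
      simp only [hd]; nlinarith
    obtain ⟨p0, p1⟩ := diag_psd_pair d d0 d1
    set M : Matrix (Fin n) (Fin n) ℝ := t • Γ + (1 - t) • diagonal d with hM
    have m0 : M.PosSemidef :=
      ((corr_psd hρ).smul ht0.le).add (p0.smul (by linarith))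
    have m1 : (1 - M).PosSemidef := by
      have : 1 - M = t • (1 - Γ) + (1 - t) • (1 - diagonal d) := by
        rw [hM]; module
      rw [this]
      exact ((corr_psd' hc hρ htr).smul ht0.le).add (p1.smul (by linarith))
    have mjj : ∀ j, M j j = t * Γ j j + (1 - t) * α * (1 - Γ j j) := fun j => by
      simp [hM, hd, mul_assoc]
    have mjk : ∀ j k, j ≠ k → M j k = t * Γ j k := fun j k h => by
      simp [hM, h]
    have mle : ∀ j, M j j ≤ 1/2 := fun j => by
      rw [mjj]
      have := g0 j; have := g1 j
      nlinarith
    have mnn : ∀ j, 0 ≤ M j j := fun j => m0.diag_nonneg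
    obtain ⟨ρ, hg, hNρ, hHρ⟩ := gauss_energy c hc E E' hE hE' w w' M m0 m1
    refine ⟨ρ, hg, ?_, ?_⟩
    · rw [hNρ]
      have : ∑ j, M j j = q := by
        simp only [mjj, Finset.sum_add_distrib, ← Finset.mul_sum, Finset.sum_sub_distrib, gq]
        simp only [Finset.sum_const, Finset.card_univ, Fintype.card_fin, nsmul_eq_mul, mul_one]
        rw [hα]; field_simp; ring
      rw [this]; simp
    · rw [hHρ, Complex.real_le_real]
      refine hl2.trans ?_
      unfold energy
      have z : ∑ e ∈ E', w' e * (-2 * M e.1 e.2) = t * Q := by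
        rw [hQ, Finset.mul_sum]
        exact Finset.sum_congr rfl fun e he => by rw [mjk _ _ (hE' e he).ne]; ring
      rw [z]
      refine le_add_of_nonneg_left (Finset.sum_nonneg fun e he => mul_nonneg (hw e he) ?_)
      have a1 := mle e.1; have a2 := mle e.2; have b1 := mnn e.1; have b2 := mnn e.2
      nlinarith [sq_nonneg (M e.1 e.2), mul_le_mul a1 a2 b2 (by norm_num)]

end
end
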